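/- arXiv:1808.03615 — 4 statements merged into one kernel-verified Lean document; each statement's English description precedes it below -/
import Mathlib

section
/- Every Steiner triple system Y1 with at least 3 points is a subsystem of a Steiner triple system Z on 4|Y1|+3 points (namely Z = 2(2Y1+1)+1) that is PG(3,2)-2-pointed with respect to some pair of its points; moreover 4|Y1|+3 ≡ 7 (mod 8). -/
open Finset

noncomputable section
open scoped Classical

/-- `T` is the set of triples of a Steiner triple system on the finite type `α`:
every pair of distinct points lies in exactly one triple. -/
def IsSTS {α : Type*} (T : Finset (Finset α)) : Prop :=
  (∀ t ∈ T, t.card = 3) ∧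
    ∀ p q : α, p ≠ q → ∃! t : Finset α, t ∈ T ∧ p ∈ t ∧ q ∈ t

/-- `T` is the set of triples of a partial Steiner triple system on `α`:
every pair of distinct points lies in at most one triple. -/
def IsPSTS {α : Type*} (T : Finset (Finset α)) : Prop :=
  (∀ t ∈ T, t.card = 3) ∧
    ∀ p q : α, p ≠ q → ∀ t₁ ∈ T, ∀ t₂ ∈ T, p ∈ t₁ → q ∈ t₁ → p ∈ t₂ → q ∈ t₂ → t₁ = t₂

/-- `W` is a (closed) subsystem of the triple system `T`. -/
def IsSub {α : Type*} (T : Finset (Finset α)) (W : Finset α) : Prop :=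
  ∀ t ∈ T, 2 ≤ (t ∩ W).card → t ⊆ W

/-- `g` is an automorphism of the triple system `T`. -/
def IsAut {α : Type*} (T : Finset (Finset α)) (g : Equiv.Perm α) : Prop :=
  ∀ t : Finset α, t ∈ T ↔ t.image g ∈ T

/-- The automorphism group of a triple system, as a subgroup of the permutation group. -/
def autGroup {α : Type*} (T : Finset (Finset α)) : Subgroup (Equiv.Perm α) where
  carrier := {g : Equiv.Perm α | IsAut T g}
  one_mem' := by
    intro t
    simp
  mul_mem' := by
    intro a b ha hb t
    have h1 := hb t
    have h2 := ha (t.image b)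
    have key : t.image ⇑(a * b) = (t.image ⇑b).image ⇑a := by
      rw [Equiv.Perm.coe_mul, Finset.image_image]
    rw [key, ← h2]
    exact h1
  inv_mem' := by
    intro a ha t
    have h := ha (t.image ⇑a⁻¹)
    have key : (t.image ⇑a⁻¹).image ⇑a = t := by
      rw [Finset.image_image]
      have hc : (⇑a ∘ ⇑a⁻¹) = id := by
        funext x
        simp
      rw [hc, Finset.image_id]
    rw [key] at h
    exact h.symm

/-- `φ` embeds the triple system `S` onto a subsystem of `T`: it is injective, maps
triples of `S` to triples of `T`, and the triples of `T` inside the image of `φ` are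
precisely the images of the triples of `S`. -/
def IsCopy {α β : Type*} [Fintype α] (S : Finset (Finset α)) (T : Finset (Finset β))
    (φ : α → β) : Prop :=
  Function.Injective φ ∧ (∀ s ∈ S, s.image φ ∈ T) ∧
    ∀ t ∈ T, t ⊆ Finset.univ.image φ → ∃ s ∈ S, t = s.image φ

/-- The point set `W` is invariant under every automorphism of `T`. -/
def AutInvariant {β : Type*} (T : Finset (Finset β)) (W : Finset β) : Prop :=
  ∀ g : Equiv.Perm β, IsAut T g → W.image g = W

/-- For the copy of `S` inside `T` given by `φ`, restriction gives a group isomorphism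
from `Aut T` onto `Aut S`: every automorphism of `T` induces (via `φ`) an automorphism
of `S`, and every automorphism of `S` is induced by exactly one automorphism of `T`. -/
def AutRestrictIso {α β : Type*} (T : Finset (Finset β)) (S : Finset (Finset α))
    (φ : α → β) : Prop :=
  (∀ g : Equiv.Perm β, IsAut T g →
      ∃ h : Equiv.Perm α, IsAut S h ∧ ∀ x : α, g (φ x) = φ (h x)) ∧
    ∀ h : Equiv.Perm α, IsAut S h →
      ∃! g : Equiv.Perm β, IsAut T g ∧ ∀ x : α, g (φ x) = φ (h x)

/-- `φ` embeds `S` as an `Aut T`-invariant subsystem of `T` on which `Aut T` induces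
the full automorphism group of `S`, with `Aut T ≅ Aut S` via restriction. -/
def FullEmbedding {α β : Type*} [Fintype α] (S : Finset (Finset α)) (T : Finset (Finset β))
    (φ : α → β) : Prop :=
  IsCopy S T φ ∧ AutInvariant T (Finset.univ.image φ) ∧ AutRestrictIso T S φ

/-- The points of the projective space `PG(n,2)`: nonzero vectors of `GF(2)^{n+1}`. -/
abbrev PGPoint (n : ℕ) := {x : Fin (n + 1) → ZMod 2 // x ≠ 0}

/-- The lines of `PG(n,2)`: 3-sets of nonzero vectors summing to `0`. -/
def PGTriples (n : ℕ) : Finset (Finset (PGPoint n)) :=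
  Finset.univ.filter fun t : Finset (PGPoint n) =>
    t.card = 3 ∧ ∑ v ∈ t, (v : Fin (n + 1) → ZMod 2) = 0

/-- The smallest subsystem of `T` containing the point set `P`. -/
def GeneratedSub {α : Type*} [Fintype α] (T : Finset (Finset α)) (P : Finset α) : Finset α :=
  Finset.univ.filter fun x => ∀ W : Finset α, IsSub T W → P ⊆ W → x ∈ W

/-- `W` is a subsystem of `T` isomorphic to `PG(n,2)`. -/
def IsPGSub {α : Type*} [Fintype α] (n : ℕ) (T : Finset (Finset α)) (W : Finset α) : Prop :=
  ∃ φ : PGPoint n → α, IsCopy (PGTriples n) T φ ∧ Finset.univ.image φ = W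

/-- A triple system is `PG(2,2)`-paired if any two distinct points lie in at least two
subsystems isomorphic to `PG(2,2)`. -/
def PG22Paired {α : Type*} [Fintype α] (T : Finset (Finset α)) : Prop :=
  ∀ p q : α, p ≠ q → ∃ W₁ W₂ : Finset α, W₁ ≠ W₂ ∧
    (p ∈ W₁ ∧ q ∈ W₁ ∧ IsPGSub 2 T W₁) ∧ p ∈ W₂ ∧ q ∈ W₂ ∧ IsPGSub 2 T W₂

/-- `T` is `PG(3,2)`-2-pointed with respect to the points `p, q`: any four points
including `p` and `q` generate a subsystem isomorphic to `PG(2,2)` or `PG(3,2)`. -/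
def PG32TwoPointed {α : Type*} [Fintype α] (T : Finset (Finset α)) (p q : α) : Prop :=
  p ≠ q ∧ ∀ s : Finset α, s.card = 4 → p ∈ s → q ∈ s →
    IsPGSub 2 T (GeneratedSub T s) ∨ IsPGSub 3 T (GeneratedSub T s)

/-- The copy of `Y` inside `2Y+1`. -/
def dp0 {γ : Type*} (a : γ) : γ ⊕ γ ⊕ Unit := Sum.inl a

/-- The disjoint copy `Y₁` of `Y` inside `2Y+1`. -/
def dp1 {γ : Type*} (a : γ) : γ ⊕ γ ⊕ Unit := Sum.inr (Sum.inl a)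

/-- The extra point `*` of `2Y+1`. -/
def dpStar {γ : Type*} : γ ⊕ γ ⊕ Unit := Sum.inr (Sum.inr ())

/-- The triples of the Steiner triple system `2Y+1` built from a system `Y` with
triple set `T`. -/
def DoubleTriples {γ : Type*} [Fintype γ] (T : Finset (Finset γ)) :
    Finset (Finset (γ ⊕ γ ⊕ Unit)) :=
  Finset.univ.filter fun t : Finset (γ ⊕ γ ⊕ Unit) =>
    (∃ s ∈ T, t = s.image dp0) ∨
    (∃ a : γ, t = {dpStar, dp0 a, dp1 a}) ∨
    (∃ a b c : γ, ({a, b, c} : Finset γ) ∈ T ∧ t = {dp1 a, dp1 b, dp0 c})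

/-- The triples of the direct product of two triple systems. -/
def ProdTriples {α β : Type*} [Fintype α] [Fintype β]
    (TA : Finset (Finset α)) (TB : Finset (Finset β)) : Finset (Finset (α × β)) :=
  Finset.univ.filter fun t : Finset (α × β) =>
    (∃ a : α, ∃ s ∈ TB, t = s.image fun b => (a, b)) ∨
    (∃ b : β, ∃ s ∈ TA, t = s.image fun a => (a, b)) ∨
    (∃ a₁ a₂ a₃ : α, ∃ b₁ b₂ b₃ : β, ({a₁, a₂, a₃} : Finset α) ∈ TA ∧
      ({b₁, b₂, b₃} : Finset β) ∈ TB ∧ t = {(a₁, b₁), (a₂, b₂), (a₃, b₃)})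

/-- The triples of Moore's construction `U = X ∪ (V × A)`.  Here `TX` (on `δ`), `TV`
(on `α`), `TY` (on `γ`) are the triple sets of `X`, `V`, `Y`; `j : δ → γ` embeds `X`
as a subsystem of `Y` and `ℓ : A → γ` labels `Y − X` by the group `A`. -/
def MooreTriples {δ α γ A : Type*} [Fintype δ] [Fintype α] [Fintype A] [Group A]
    (TX : Finset (Finset δ)) (TV : Finset (Finset α)) (TY : Finset (Finset γ))
    (j : δ → γ) (ℓ : A → γ) : Finset (Finset (δ ⊕ α × A)) :=
  Finset.univ.filter fun t : Finset (δ ⊕ α × A) =>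
    (∃ s ∈ TX, t = s.image Sum.inl) ∨
    (∃ v : α, ∃ a₁ a₂ : A, ∃ x : δ, ({ℓ a₁, ℓ a₂, j x} : Finset γ) ∈ TY ∧
      t = {Sum.inr (v, a₁), Sum.inr (v, a₂), Sum.inl x}) ∨
    (∃ v : α, ∃ a₁ a₂ a₃ : A, ({ℓ a₁, ℓ a₂, ℓ a₃} : Finset γ) ∈ TY ∧
      t = {Sum.inr (v, a₁), Sum.inr (v, a₂), Sum.inr (v, a₃)}) ∨
    (∃ v₁ v₂ v₃ : α, ∃ a₁ a₂ a₃ : A, ({v₁, v₂, v₃} : Finset α) ∈ TV ∧ a₁ * a₂ * a₃ = 1 ∧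
      t = {Sum.inr (v₁, a₁), Sum.inr (v₂, a₂), Sum.inr (v₃, a₃)})

/-- The hypotheses of Moore's construction: `Y` and `V` are Steiner triple systems,
`A` is a cyclic group, `j` embeds `X` as a subsystem of `Y` (with triple set `TX`),
and `ℓ` is a bijective labeling of `Y − X` by `A`. -/
def MooreSetup {δ α γ A : Type*} [Fintype δ] [Group A]
    (TX : Finset (Finset δ)) (TV : Finset (Finset α)) (TY : Finset (Finset γ))
    (j : δ → γ) (ℓ : A → γ) : Prop :=
  IsSTS TY ∧ IsSTS TV ∧ IsCyclic A ∧ Function.Injective j ∧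
    IsSub TY (Finset.univ.image j) ∧ IsCopy TX TY j ∧
    Function.Injective ℓ ∧ Set.range ℓ = (Set.range j)ᶜ

/-- The subsystem `Y_v = X ∪ (v × A)` of Moore's construction. -/
def MooreY {δ α A : Type*} [Fintype δ] [Fintype A] (v : α) : Finset (δ ⊕ α × A) :=
  (Finset.univ.image (Sum.inl : δ → δ ⊕ α × A)) ∪
    Finset.univ.image fun a : A => (Sum.inr (v, a) : δ ⊕ α × A)

/-- A subsystem of type (3.1) of Moore's construction, where `ε` denotes the unique
involution `−1` of `A`: the seven points `x, (v_i, a_i), (v_i, −a_i)` for a triple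
`{v₁,v₂,v₃}` of `V`, with `a₁a₂a₃ = 1` and `{a_i, −a_i, x}` a triple of `Y`. -/
def MooreType31 {δ α γ A : Type*} [Group A] (TV : Finset (Finset α))
    (TY : Finset (Finset γ)) (j : δ → γ) (ℓ : A → γ) (ε : A)
    (W : Finset (δ ⊕ α × A)) : Prop :=
  ∃ v₁ v₂ v₃ : α, ∃ a₁ a₂ a₃ : A, ∃ x : δ,
    ({v₁, v₂, v₃} : Finset α) ∈ TV ∧ a₁ * a₂ * a₃ = 1 ∧
    ({ℓ a₁, ℓ (ε * a₁), j x} : Finset γ) ∈ TY ∧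
    ({ℓ a₂, ℓ (ε * a₂), j x} : Finset γ) ∈ TY ∧
    ({ℓ a₃, ℓ (ε * a₃), j x} : Finset γ) ∈ TY ∧
    W = {Sum.inl x, Sum.inr (v₁, a₁), Sum.inr (v₁, ε * a₁), Sum.inr (v₂, a₂),
         Sum.inr (v₂, ε * a₂), Sum.inr (v₃, a₃), Sum.inr (v₃, ε * a₃)}

/-- The point set of a family of triples. -/
def ptsOf {β : Type*} (T : Finset (Finset β)) : Finset β := T.sup id

/-- Adjacency of triples: two distinct triples of `T` meeting in a point. -/
def TriAdj {β : Type*} (T : Finset (Finset β)) (t s : Finset β) : Prop :=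
  t ∈ T ∧ s ∈ T ∧ t ≠ s ∧ (t ∩ s).Nonempty

/-- A partial Steiner triple system is cyclic if the graph whose vertices are its
triples, two joined when they meet, is a cycle (equivalently: it has at least three
triples, every triple meets exactly two others, and the graph is connected). -/
def IsCyclicPSTS {β : Type*} (T : Finset (Finset β)) : Prop :=
  3 ≤ T.card ∧ (∀ t ∈ T, (T.filter fun s => s ≠ t ∧ (s ∩ t).Nonempty).card = 2) ∧
    ∀ t ∈ T, ∀ s ∈ T, Relation.ReflTransGen (TriAdj T) t s

/-- The partial Steiner triple system `Q(z)` (for the parameter `n`), with triple set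
`T`, point set `P` and distinguished point `z`: two cyclic PSTSs `C₁, C₂` on
`2n+4` and `2n+6` points meeting exactly in the point `z`, which lies in two triples
of each, triples `{z, z'_i, z_i}` of `C_i` with `z'_i` in two triples of `C_i`, and a
new point `z'` in the single additional triple `{z'_1, z', z'_2}`. -/
def IsQ {β : Type*} (n : ℕ) (T : Finset (Finset β)) (P : Finset β) (z : β) : Prop :=
  ∃ C₁ C₂ : Finset (Finset β), ∃ z' z₁' z₂' z₁ z₂ : β,
    IsPSTS T ∧ IsCyclicPSTS C₁ ∧ IsCyclicPSTS C₂ ∧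
    (ptsOf C₁).card = 2 * n + 4 ∧ (ptsOf C₂).card = 2 * n + 6 ∧
    ptsOf C₁ ∩ ptsOf C₂ = {z} ∧
    (C₁.filter fun t => z ∈ t).card = 2 ∧ (C₂.filter fun t => z ∈ t).card = 2 ∧
    ({z, z₁', z₁} : Finset β) ∈ C₁ ∧ (C₁.filter fun t => z₁' ∈ t).card = 2 ∧
    ({z, z₂', z₂} : Finset β) ∈ C₂ ∧ (C₂.filter fun t => z₂' ∈ t).card = 2 ∧
    z' ∉ ptsOf C₁ ∪ ptsOf C₂ ∧
    T = C₁ ∪ C₂ ∪ {({z₁', z', z₂'} : Finset β)} ∧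
    P = ptsOf C₁ ∪ ptsOf C₂ ∪ {z'}

/-- Nonempty subsets of `β`: the points of the projective space `P` over `GF(2)`
built on a point set `β`. -/
abbrev NESet (β : Type*) := {s : Finset β // s.Nonempty}

/-- The triples of the projective space over `GF(2)` on the nonempty subsets of `β`:
3-sets of subsets with empty symmetric difference. -/
def sdTriples (β : Type*) [Fintype β] : Finset (Finset (NESet β)) :=
  Finset.univ.filter fun t : Finset (NESet β) =>
    ∃ a b c : NESet β, a ≠ b ∧ a ≠ c ∧ b ≠ c ∧ t = {a, b, c} ∧
      symmDiff (symmDiff a.1 b.1) c.1 = ∅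

/-- The singleton `{a}` as a point of the projective space. -/
def sEl {β : Type*} (a : β) : NESet β := ⟨{a}, Finset.singleton_nonempty a⟩

/-- The pair `{a,b}` as a point of the projective space. -/
def pEl {β : Type*} (a b : β) : NESet β := ⟨{a, b}, Finset.insert_nonempty a {b}⟩

/-- The triples of `P` removed in Cameron's construction, for each triple `{a,b,c}`
of `V'`. -/
def removedTriples {β : Type*} [Fintype β] (TV' : Finset (Finset β)) :
    Finset (Finset (NESet β)) :=
  Finset.univ.filter fun t : Finset (NESet β) =>
    ∃ a b c : β, ({a, b, c} : Finset β) ∈ TV' ∧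
      (t = {pEl a b, pEl a c, pEl b c} ∨ t = {sEl a, sEl b, pEl a b} ∨
       t = {sEl a, sEl c, pEl a c} ∨ t = {sEl b, sEl c, pEl b c})

/-- The new triples of Cameron's construction, for each triple `{a,b,c}` of `V'`. -/
def addedTriples {β : Type*} [Fintype β] (TV' : Finset (Finset β)) :
    Finset (Finset (NESet β)) :=
  Finset.univ.filter fun t : Finset (NESet β) =>
    ∃ a b c : β, ({a, b, c} : Finset β) ∈ TV' ∧
      (t = {sEl a, sEl b, sEl c} ∨ t = {sEl a, pEl a b, pEl a c} ∨
       t = {sEl b, pEl a b, pEl b c} ∨ t = {sEl c, pEl a c, pEl b c})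

/-- The Steiner triple system `U` of Cameron's construction obtained from the
projective space `P` and the partial system `V'`. -/
def CameronSTS {β : Type*} [Fintype β] (TV' : Finset (Finset β)) :
    Finset (Finset (NESet β)) :=
  (sdTriples β \ removedTriples TV') ∪ addedTriples TV'

/-! Adjoining an identity element to a Steiner triple system turns it into its Steiner loop, and the
loop of `2Y+1` is the product of the loop of `Y` with a group `{1, *}` of order two. Hence the
subsystems of `2Y+1` through `*` are exactly the `2W+1` with `W` a subsystem of `Y`. In `2(2Y+1)+1`,
four points that include both extra points therefore generate `2(2W+1)+1`, where `W` is the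
subsystem of `Y` generated by the one or two points of `Y` under the remaining ones. Such a `W` is a
point `PG(0,2)` or a triple `PG(1,2)`, and each doubling of `PG(n,2)` gives `PG(n+1,2)`. -/

section

/-- The classical decidable equality on a sum type, chosen as the instance because an arbitrary
point type also carries the classical one: facts about any `Y` then apply verbatim to `2Y+1`. -/
abbrev classicalDecidableEqSum (α β : Type*) : DecidableEq (α ⊕ β) :=
  fun a b => Classical.propDecidable (a = b)

attribute [local instance] classicalDecidableEqSum

section SteinerTripleSystem

variable {α : Type*} {T : Finset (Finset α)} {W : Finset α}

theorem exists_eq_triple_of_mem {t : Finset α} (ht : t.card = 3) {a b : α} (ha : a ∈ t)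
    (hb : b ∈ t) (hab : a ≠ b) : ∃ c, c ≠ a ∧ c ≠ b ∧ t = {a, b, c} := by
  have hb' : b ∈ t.erase a := mem_erase.2 ⟨hab.symm, hb⟩
  obtain ⟨c, hc⟩ : ∃ c, (t.erase a).erase b = {c} := card_eq_one.1 (by
    rw [card_erase_of_mem hb', card_erase_of_mem ha, ht])
  have hc' : c ∈ (t.erase a).erase b := hc ▸ mem_singleton_self c
  simp only [mem_erase] at hc'
  exact ⟨c, hc'.2.1, hc'.1, by rw [← hc, insert_erase hb', insert_erase ha]⟩

theorem isSub_iff : IsSub T W ↔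
    ∀ t ∈ T, ∀ x ∈ t, ∀ y ∈ t, x ≠ y → x ∈ W → y ∈ W → t ⊆ W := by
  refine ⟨fun hW t ht x hx y hy hxy hxW hyW => hW t ht ?_, fun hW t ht h2 => ?_⟩
  · exact one_lt_card.2 ⟨x, mem_inter.2 ⟨hx, hxW⟩, y, mem_inter.2 ⟨hy, hyW⟩, hxy⟩
  · obtain ⟨x, hx, y, hy, hxy⟩ := one_lt_card.1 h2
    rw [mem_inter] at hx hy
    exact hW t ht x hx.1 y hy.1 hxy hx.2 hy.2

theorem isSub_singleton (T : Finset (Finset α)) (a : α) : IsSub T {a} :=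
  isSub_iff.2 fun _ _ _ _ _ _ hxy hx hy =>
    absurd ((mem_singleton.1 hx).trans (mem_singleton.1 hy).symm) hxy

namespace IsSTS

theorem eq_of_mem_of_mem (hT : IsSTS T) {t s : Finset α} (ht : t ∈ T) (hs : s ∈ T) {x y : α}
    (hxy : x ≠ y) (hxt : x ∈ t) (hyt : y ∈ t) (hxs : x ∈ s) (hys : y ∈ s) : t = s :=
  (hT.2 x y hxy).unique ⟨ht, hxt, hyt⟩ ⟨hs, hxs, hys⟩

theorem isSub_of_mem (hT : IsSTS T) {t : Finset α} (ht : t ∈ T) : IsSub T t :=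
  isSub_iff.2 fun _ hs _ hx _ hy hxy hxt hyt =>
    (hT.eq_of_mem_of_mem hs ht hxy hx hy hxt hyt).subset

theorem ne_of_triple_mem (hT : IsSTS T) {a b c : α} (h : {a, b, c} ∈ T) :
    a ≠ b ∧ a ≠ c ∧ b ≠ c := by
  have hcard := hT.1 _ h
  grind

theorem eq_of_triple_mem (hT : IsSTS T) {a b c d : α} (hc : {a, b, c} ∈ T)
    (hd : {a, b, d} ∈ T) : c = d := by
  obtain ⟨hab, hac, hbc⟩ := hT.ne_of_triple_mem hc
  have hcd : c ∈ ({a, b, d} : Finset α) :=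
    hT.eq_of_mem_of_mem hc hd hab (by simp) (by simp) (by simp) (by simp) ▸ by simp
  simpa [hac.symm, hbc.symm] using hcd

theorem exists_triple_mem (hT : IsSTS T) {a b : α} (hab : a ≠ b) :
    ∃ c, c ≠ a ∧ c ≠ b ∧ {a, b, c} ∈ T := by
  obtain ⟨t, ⟨ht, ha, hb⟩, -⟩ := hT.2 a b hab
  obtain ⟨c, hca, hcb, rfl⟩ := exists_eq_triple_of_mem (hT.1 t ht) ha hb hab
  exact ⟨c, hca, hcb, ht⟩

theorem odd_card [Fintype α] [Nonempty α] (hT : IsSTS T) : Odd (Fintype.card α) := by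
  obtain ⟨p⟩ := ‹Nonempty α›
  have hcount : (T.filter (p ∈ ·)).card * 2 = (univ.erase p).card * 1 := by
    refine card_mul_eq_card_mul (fun t q => q ∈ t) (fun t ht => ?_) fun q hq => ?_
    · have : (univ.erase p).bipartiteAbove (fun t q => q ∈ t) t = t.erase p := by
        ext q
        simp [mem_bipartiteAbove]
      rw [mem_filter] at ht
      rw [this, card_erase_of_mem ht.2, hT.1 t ht.1]
    · obtain ⟨t, ht, huniq⟩ := hT.2 p q (ne_of_mem_erase hq).symm
      refine card_eq_one.2 ⟨t, eq_singleton_iff_unique_mem.2 ⟨?_, fun s hs => huniq s ?_⟩⟩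
      · simpa [mem_bipartiteBelow, and_assoc] using ht
      · simpa [mem_bipartiteBelow, and_assoc] using hs
  rw [card_erase_of_mem (mem_univ p), card_univ] at hcount
  have hpos : 0 < Fintype.card α := Fintype.card_pos_iff.2 ⟨p⟩
  exact ⟨(T.filter (p ∈ ·)).card, by omega⟩

end IsSTS

end SteinerTripleSystem

section GeneratedSub

variable {α : Type*} [Fintype α] {T : Finset (Finset α)} {P W : Finset α}

theorem mem_generatedSub {x : α} :
    x ∈ GeneratedSub T P ↔ ∀ W, IsSub T W → P ⊆ W → x ∈ W := by
  simp [GeneratedSub]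

theorem subset_generatedSub : P ⊆ GeneratedSub T P :=
  fun _ hx => mem_generatedSub.2 fun _ _ hPW => hPW hx

theorem generatedSub_subset (hW : IsSub T W) (hPW : P ⊆ W) : GeneratedSub T P ⊆ W :=
  fun _ hx => mem_generatedSub.1 hx W hW hPW

theorem isSub_generatedSub : IsSub T (GeneratedSub T P) :=
  isSub_iff.2 fun t ht x hx y hy hxy hxP hyP _ hz => mem_generatedSub.2 fun W hW hPW =>
    isSub_iff.1 hW t ht x hx y hy hxy (mem_generatedSub.1 hxP W hW hPW)
      (mem_generatedSub.1 hyP W hW hPW) hz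

theorem generatedSub_singleton (T : Finset (Finset α)) (a : α) : GeneratedSub T {a} = {a} :=
  (generatedSub_subset (isSub_singleton T a) subset_rfl).antisymm subset_generatedSub

theorem IsSTS.generatedSub_pair (hT : IsSTS T) {a b c : α} (hab : a ≠ b)
    (h : {a, b, c} ∈ T) : GeneratedSub T {a, b} = {a, b, c} := by
  refine (generatedSub_subset (hT.isSub_of_mem h) (by simp [insert_subset_iff])).antisymm ?_
  exact isSub_iff.1 isSub_generatedSub _ h a (by simp) b (by simp) hab
    (subset_generatedSub (by simp)) (subset_generatedSub (by simp))

end GeneratedSub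

namespace IsCopy

variable {α β δ : Type*} [Fintype α] {S : Finset (Finset α)} {T : Finset (Finset β)}
  {U : Finset (Finset δ)} {φ : α → β} {ψ : β → δ}

theorem comp [Fintype β] (hψ : IsCopy T U ψ) (hφ : IsCopy S T φ) : IsCopy S U (ψ ∘ φ) := by
  refine ⟨hψ.1.comp hφ.1, fun s hs => ?_, fun t ht htφ => ?_⟩
  · rw [← image_image]
    exact hψ.2.1 _ (hφ.2.1 s hs)
  · rw [← image_image] at htφ
    obtain ⟨s, hs, rfl⟩ := hψ.2.2 t ht (htφ.trans (image_subset_image (subset_univ _)))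
    rw [image_subset_image_iff hψ.1] at htφ
    obtain ⟨r, hr, rfl⟩ := hφ.2.2 s hs htφ
    exact ⟨r, hr, image_image⟩

theorem isSub_image (hS : IsSTS S) (hT : IsSTS T) (hφ : IsCopy S T φ) :
    IsSub T (univ.image φ) := by
  refine isSub_iff.2 fun t ht x hx y hy hxy hxφ hyφ => ?_
  obtain ⟨a, -, rfl⟩ := mem_image.1 hxφ
  obtain ⟨b, -, rfl⟩ := mem_image.1 hyφ
  obtain ⟨s, ⟨hs, has, hbs⟩, -⟩ := hS.2 a b (ne_of_apply_ne φ hxy)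
  rw [hT.eq_of_mem_of_mem ht (hφ.2.1 s hs) hxy hx hy (mem_image_of_mem φ has)
    (mem_image_of_mem φ hbs)]
  exact image_subset_image (subset_univ s)

end IsCopy

section DoubleTriples

variable {β : Type*}

theorem dp0_injective : Function.Injective (dp0 : β → β ⊕ β ⊕ Unit) := Sum.inl_injective

theorem dp1_injective : Function.Injective (dp1 : β → β ⊕ β ⊕ Unit) :=
  Sum.inr_injective.comp Sum.inl_injective

theorem eq_dp0_or_eq_dp1_or_eq_dpStar (x : β ⊕ β ⊕ Unit) :
    (∃ a, x = dp0 a) ∨ (∃ a, x = dp1 a) ∨ x = dpStar := by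
  rcases x with a | a | ⟨⟩
  exacts [Or.inl ⟨a, rfl⟩, Or.inr (Or.inl ⟨a, rfl⟩), Or.inr (Or.inr rfl)]

variable [Fintype β] {T : Finset (Finset β)}

theorem mem_doubleTriples {t : Finset (β ⊕ β ⊕ Unit)} :
    t ∈ DoubleTriples T ↔ (∃ s ∈ T, t = s.image dp0) ∨
      (∃ a : β, t = {dpStar, dp0 a, dp1 a}) ∨
      (∃ a b c : β, ({a, b, c} : Finset β) ∈ T ∧ t = {dp1 a, dp1 b, dp0 c}) := by
  simp only [DoubleTriples, mem_filter, mem_univ, true_and]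
  congr!

theorem image_dp0_mem_doubleTriples {s : Finset β} (hs : s ∈ T) :
    s.image dp0 ∈ DoubleTriples T :=
  mem_doubleTriples.2 (Or.inl ⟨s, hs, rfl⟩)

theorem star_mem_doubleTriples (T : Finset (Finset β)) (a : β) :
    {dpStar, dp0 a, dp1 a} ∈ DoubleTriples T :=
  mem_doubleTriples.2 (Or.inr (Or.inl ⟨a, rfl⟩))

theorem mixed_mem_doubleTriples {a b c : β} (h : {a, b, c} ∈ T) :
    {dp1 a, dp1 b, dp0 c} ∈ DoubleTriples T :=
  mem_doubleTriples.2 (Or.inr (Or.inr ⟨a, b, c, h, rfl⟩))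

section MemDoubleTriples

variable {t : Finset (β ⊕ β ⊕ Unit)} {a b : β}

theorem exists_eq_star_of_dpStar_mem (ht : t ∈ DoubleTriples T) (h : dpStar ∈ t) :
    ∃ a, t = {dpStar, dp0 a, dp1 a} := by
  rcases mem_doubleTriples.1 ht with ⟨s, -, rfl⟩ | ⟨a, rfl⟩ | ⟨a, b, c, -, rfl⟩
  · simp [dp0, dpStar] at h
  · exact ⟨a, rfl⟩
  · simp [dp0, dp1, dpStar] at h

theorem exists_eq_image_of_dp0_mem_of_dp0_mem (ht : t ∈ DoubleTriples T) (hab : a ≠ b)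
    (ha : dp0 a ∈ t) (hb : dp0 b ∈ t) : ∃ s ∈ T, t = s.image dp0 := by
  rcases mem_doubleTriples.1 ht with h | ⟨c, rfl⟩ | ⟨c, d, e, -, rfl⟩
  · exact h
  all_goals
    simp only [dp0, dp1, dpStar, mem_insert, mem_singleton, reduceCtorEq, Sum.inl.injEq,
      false_or, or_false] at ha hb
    exact absurd (ha.trans hb.symm) hab

theorem exists_eq_mixed_of_dp1_mem_of_dp1_mem (ht : t ∈ DoubleTriples T) (hab : a ≠ b)
    (ha : dp1 a ∈ t) (hb : dp1 b ∈ t) : ∃ c, {a, b, c} ∈ T ∧ t = {dp1 a, dp1 b, dp0 c} := by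
  rcases mem_doubleTriples.1 ht with ⟨s, -, rfl⟩ | ⟨c, rfl⟩ | ⟨a', b', c, h, rfl⟩
  · simp [dp0, dp1] at ha
  · simp only [dp0, dp1, dpStar, mem_insert, mem_singleton, reduceCtorEq, Sum.inl.injEq,
      Sum.inr.injEq, false_or] at ha hb
    exact absurd (ha.trans hb.symm) hab
  · simp only [dp0, dp1, mem_insert, mem_singleton, reduceCtorEq, Sum.inl.injEq, Sum.inr.injEq,
      or_false] at ha hb
    rcases ha with rfl | rfl <;> rcases hb with rfl | rfl
    · exact absurd rfl hab
    · exact ⟨c, h, rfl⟩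
    · exact ⟨c, insert_comm b a {c} ▸ h, insert_comm _ _ _⟩
    · exact absurd rfl hab

theorem exists_eq_mixed_of_dp0_mem_of_dp1_mem (ht : t ∈ DoubleTriples T) (hab : a ≠ b)
    (ha : dp0 a ∈ t) (hb : dp1 b ∈ t) : ∃ c, {b, c, a} ∈ T ∧ t = {dp1 b, dp1 c, dp0 a} := by
  rcases mem_doubleTriples.1 ht with ⟨s, -, rfl⟩ | ⟨c, rfl⟩ | ⟨b', c, a', h, rfl⟩
  · simp [dp0, dp1] at hb
  · simp only [dp0, dp1, dpStar, mem_insert, mem_singleton, reduceCtorEq, Sum.inl.injEq,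
      Sum.inr.injEq, false_or, or_false] at ha hb
    exact absurd (ha.trans hb.symm) hab
  · simp only [dp0, dp1, mem_insert, mem_singleton, reduceCtorEq, Sum.inl.injEq, Sum.inr.injEq,
      false_or, or_false] at ha hb
    subst ha
    rcases hb with rfl | rfl
    · exact ⟨c, h, rfl⟩
    · exact ⟨b', insert_comm b' b {a} ▸ h, insert_comm _ _ _⟩

end MemDoubleTriples

theorem existsUnique_doubleTriples_dpStar (T : Finset (Finset β)) {x : β ⊕ β ⊕ Unit}
    (hx : x ≠ dpStar) : ∃! t, t ∈ DoubleTriples T ∧ dpStar ∈ t ∧ x ∈ t := by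
  obtain ⟨a, ha⟩ : ∃ a, x = dp0 a ∨ x = dp1 a := by
    rcases eq_dp0_or_eq_dp1_or_eq_dpStar x with ⟨a, h⟩ | ⟨a, h⟩ | h
    exacts [⟨a, Or.inl h⟩, ⟨a, Or.inr h⟩, absurd h hx]
  refine ⟨_, ⟨star_mem_doubleTriples T a, by simp, by simp [ha]⟩, ?_⟩
  rintro t ⟨ht, h, hxt⟩
  obtain ⟨b, rfl⟩ := exists_eq_star_of_dpStar_mem ht h
  rcases ha with rfl | rfl <;> simp_all [dp0, dp1, dpStar]

namespace IsSTS

theorem card_of_mem_doubleTriples (hT : IsSTS T) {t : Finset (β ⊕ β ⊕ Unit)}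
    (ht : t ∈ DoubleTriples T) : t.card = 3 := by
  rcases mem_doubleTriples.1 ht with ⟨s, hs, rfl⟩ | ⟨a, rfl⟩ | ⟨a, b, c, h, rfl⟩
  · rw [card_image_of_injective s dp0_injective, hT.1 s hs]
  · simp [dp0, dp1, dpStar]
  · simp [dp0, dp1, (hT.ne_of_triple_mem h).1]

theorem existsUnique_doubleTriples_dp0_dp0 (hT : IsSTS T) {a b : β} (hab : a ≠ b) :
    ∃! t, t ∈ DoubleTriples T ∧ dp0 a ∈ t ∧ dp0 b ∈ t := by
  obtain ⟨s, ⟨hs, ha, hb⟩, -⟩ := hT.2 a b hab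
  refine ⟨_, ⟨image_dp0_mem_doubleTriples hs, mem_image_of_mem _ ha, mem_image_of_mem _ hb⟩, ?_⟩
  rintro t ⟨ht, ha', hb'⟩
  obtain ⟨s', hs', rfl⟩ := exists_eq_image_of_dp0_mem_of_dp0_mem ht hab ha' hb'
  rw [dp0_injective.mem_finset_image] at ha' hb'
  rw [hT.eq_of_mem_of_mem hs hs' hab ha hb ha' hb']

theorem existsUnique_doubleTriples_dp1_dp1 (hT : IsSTS T) {a b : β} (hab : a ≠ b) :
    ∃! t, t ∈ DoubleTriples T ∧ dp1 a ∈ t ∧ dp1 b ∈ t := by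
  obtain ⟨c, -, -, h⟩ := hT.exists_triple_mem hab
  refine ⟨_, ⟨mixed_mem_doubleTriples h, by simp, by simp⟩, ?_⟩
  rintro t ⟨ht, ha, hb⟩
  obtain ⟨d, hd, rfl⟩ := exists_eq_mixed_of_dp1_mem_of_dp1_mem ht hab ha hb
  rw [hT.eq_of_triple_mem hd h]

theorem existsUnique_doubleTriples_dp0_dp1 (hT : IsSTS T) (a b : β) :
    ∃! t, t ∈ DoubleTriples T ∧ dp0 a ∈ t ∧ dp1 b ∈ t := by
  rcases eq_or_ne a b with rfl | hab
  · refine ⟨_, ⟨star_mem_doubleTriples T a, by simp, by simp⟩, ?_⟩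
    rintro t ⟨ht, h0, h1⟩
    rcases mem_doubleTriples.1 ht with ⟨s, -, rfl⟩ | ⟨b, rfl⟩ | ⟨b, c, d, h, rfl⟩
    · simp [dp0, dp1] at h1
    · simp_all [dp0, dp1, dpStar]
    · have := hT.ne_of_triple_mem h
      simp only [dp0, dp1, mem_insert, mem_singleton, reduceCtorEq, Sum.inl.injEq,
        Sum.inr.injEq, false_or, or_false] at h0 h1
      grind
  · obtain ⟨c, -, -, h⟩ := hT.exists_triple_mem hab.symm
    refine ⟨_, ⟨mixed_mem_doubleTriples (pair_comm a c ▸ h), by simp, by simp⟩, ?_⟩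
    rintro t ⟨ht, ha, hb⟩
    obtain ⟨d, hd, rfl⟩ := exists_eq_mixed_of_dp0_mem_of_dp1_mem ht hab ha hb
    rw [hT.eq_of_triple_mem h (pair_comm d a ▸ hd)]

theorem doubleTriples (hT : IsSTS T) : IsSTS (DoubleTriples T) := by
  refine ⟨fun t => hT.card_of_mem_doubleTriples, ?_⟩
  have symm {x y : β ⊕ β ⊕ Unit} (h : ∃! t, t ∈ DoubleTriples T ∧ x ∈ t ∧ y ∈ t) :
      ∃! t, t ∈ DoubleTriples T ∧ y ∈ t ∧ x ∈ t := by
    simpa only [and_comm (a := y ∈ _)] using h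
  rintro (a | a | ⟨⟩) (b | b | ⟨⟩) hab
  · exact hT.existsUnique_doubleTriples_dp0_dp0 (by simpa using hab)
  · exact hT.existsUnique_doubleTriples_dp0_dp1 a b
  · exact symm (existsUnique_doubleTriples_dpStar T hab)
  · exact symm (hT.existsUnique_doubleTriples_dp0_dp1 b a)
  · exact hT.existsUnique_doubleTriples_dp1_dp1 (by simpa using hab)
  · exact symm (existsUnique_doubleTriples_dpStar T hab)
  · exact existsUnique_doubleTriples_dpStar T hab.symm
  · exact existsUnique_doubleTriples_dpStar T hab.symm
  · exact absurd rfl hab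

end IsSTS

theorem isCopy_dp0 (T : Finset (Finset β)) : IsCopy T (DoubleTriples T) dp0 := by
  refine ⟨dp0_injective, fun s hs => mem_doubleTriples.2 (Or.inl ⟨s, hs, rfl⟩), fun t ht hsub => ?_⟩
  rcases mem_doubleTriples.1 ht with ⟨s, hs, rfl⟩ | ⟨a, rfl⟩ | ⟨a, b, c, -, rfl⟩
  · exact ⟨s, hs, rfl⟩
  · simp [insert_subset_iff, dp0, dpStar] at hsub
  · simp [insert_subset_iff, dp0, dp1] at hsub

end DoubleTriples

section DoubleSet

variable {β : Type*} {T : Finset (Finset β)} {W : Finset β} {s V : Finset (β ⊕ β ⊕ Unit)} {a : β}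

/-- The point set of `2W+1` inside `2Y+1`, for a point set `W` of `Y`. -/
def doubleSet (W : Finset β) : Finset (β ⊕ β ⊕ Unit) :=
  W.image dp0 ∪ W.image dp1 ∪ {dpStar}

@[simp] theorem dp0_mem_doubleSet : dp0 a ∈ doubleSet W ↔ a ∈ W := by
  simp [doubleSet, dp0, dp1, dpStar]

@[simp] theorem dp1_mem_doubleSet : dp1 a ∈ doubleSet W ↔ a ∈ W := by
  simp [doubleSet, dp0, dp1, dpStar]

@[simp] theorem dpStar_mem_doubleSet : dpStar ∈ doubleSet W := by
  simp [doubleSet]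

theorem card_doubleSet (W : Finset β) : (doubleSet W).card = 2 * W.card + 1 := by
  rw [doubleSet, card_union_of_disjoint, card_union_of_disjoint,
    card_image_of_injective W dp0_injective, card_image_of_injective W dp1_injective,
    card_singleton, two_mul]
  all_goals simp [disjoint_left, dp0, dp1, dpStar]

theorem doubleSet_mono {W' : Finset β} (h : W ⊆ W') : doubleSet W ⊆ doubleSet W' :=
  union_subset_union_left (union_subset_union (image_subset_image h) (image_subset_image h))

variable [Fintype β]

/-- The points of `Y` lying under the points of a point set of `2Y+1` other than `*`. -/
def projSet (s : Finset (β ⊕ β ⊕ Unit)) : Finset β :=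
  univ.filter fun a => dp0 a ∈ s ∨ dp1 a ∈ s

theorem mem_projSet : a ∈ projSet s ↔ dp0 a ∈ s ∨ dp1 a ∈ s := by
  simp [projSet]

theorem projSet_mono {s' : Finset (β ⊕ β ⊕ Unit)} (h : s ⊆ s') : projSet s ⊆ projSet s' :=
  fun _ ha => mem_projSet.2 ((mem_projSet.1 ha).imp (@h _) (@h _))

theorem subset_doubleSet_iff : s ⊆ doubleSet W ↔ projSet s ⊆ W := by
  refine ⟨fun h a ha => ?_, fun h x hx => ?_⟩
  · rcases mem_projSet.1 ha with ha | ha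
    exacts [dp0_mem_doubleSet.1 (h ha), dp1_mem_doubleSet.1 (h ha)]
  · rcases eq_dp0_or_eq_dp1_or_eq_dpStar x with ⟨a, rfl⟩ | ⟨a, rfl⟩ | rfl
    exacts [dp0_mem_doubleSet.2 (h (mem_projSet.2 (Or.inl hx))),
      dp1_mem_doubleSet.2 (h (mem_projSet.2 (Or.inr hx))), dpStar_mem_doubleSet]

theorem card_projSet_lt (hs : dpStar ∈ s) : (projSet s).card < s.card := by
  refine (card_le_card_of_injOn (t := s.erase dpStar)
    (fun a => if dp0 a ∈ s then dp0 a else dp1 a) (fun a ha => ?_) fun a _ b _ h => ?_).trans_lt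
    (card_erase_lt_of_mem hs)
  · have := mem_projSet.1 ha
    by_cases h0 : dp0 a ∈ s <;> simp_all [dp0, dp1, dpStar]
  · by_cases h0 : dp0 a ∈ s <;> by_cases h1 : dp0 b ∈ s <;> simp_all [dp0, dp1]

theorem IsSTS.isSub_doubleSet (hT : IsSTS T) (hW : IsSub T W) :
    IsSub (DoubleTriples T) (doubleSet W) := by
  refine isSub_iff.2 fun t ht x hx y hy hxy hxW hyW => ?_
  rcases mem_doubleTriples.1 ht with ⟨s, hs, rfl⟩ | ⟨a, rfl⟩ | ⟨a, b, c, h, rfl⟩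
  · obtain ⟨a, ha, rfl⟩ := mem_image.1 hx
    obtain ⟨b, hb, rfl⟩ := mem_image.1 hy
    rw [dp0_mem_doubleSet] at hxW hyW
    have hsW : s ⊆ W := isSub_iff.1 hW s hs a ha b hb (ne_of_apply_ne _ hxy) hxW hyW
    exact image_subset_iff.2 fun c hc => dp0_mem_doubleSet.2 (hsW hc)
  · have ha : a ∈ W := by
      simp only [mem_insert, mem_singleton] at hx hy
      rcases hx with rfl | rfl | rfl <;> rcases hy with rfl | rfl | rfl <;> simp_all
    simp [insert_subset_iff, ha]
  · have hsW : {a, b, c} ⊆ W := by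
      have hclosed := isSub_iff.1 hW _ h
      have hne := hT.ne_of_triple_mem h
      simp only [mem_insert, mem_singleton] at hx hy
      rcases hx with rfl | rfl | rfl <;> rcases hy with rfl | rfl | rfl <;> simp_all
    simpa [insert_subset_iff] using hsW

namespace IsSub

theorem dp0_mem_iff_dp1_mem (hV : IsSub (DoubleTriples T) V) (hstar : dpStar ∈ V) :
    dp0 a ∈ V ↔ dp1 a ∈ V := by
  have key {x} (hx : x = dp0 a ∨ x = dp1 a) (hxV : x ∈ V) : {dpStar, dp0 a, dp1 a} ⊆ V :=
    isSub_iff.1 hV _ (star_mem_doubleTriples T a) dpStar (by simp) x (by simp [hx])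
      (by rcases hx with rfl | rfl <;> simp [dp0, dp1, dpStar]) hstar hxV
  exact ⟨fun h => key (Or.inl rfl) h (by simp), fun h => key (Or.inr rfl) h (by simp)⟩

theorem mem_projSet_iff (hV : IsSub (DoubleTriples T) V) (hstar : dpStar ∈ V) :
    a ∈ projSet V ↔ dp0 a ∈ V := by
  rw [mem_projSet, ← hV.dp0_mem_iff_dp1_mem hstar, or_self]

theorem isSub_projSet (hV : IsSub (DoubleTriples T) V) (hstar : dpStar ∈ V) :
    IsSub T (projSet V) := by
  refine isSub_iff.2 fun s hs a ha b hb hab haV hbV c hc => ?_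
  rw [hV.mem_projSet_iff hstar] at haV hbV ⊢
  exact isSub_iff.1 hV _ (image_dp0_mem_doubleTriples hs) _ (mem_image_of_mem _ ha) _
    (mem_image_of_mem _ hb) (dp0_injective.ne hab) haV hbV (mem_image_of_mem _ hc)

theorem doubleSet_projSet (hV : IsSub (DoubleTriples T) V) (hstar : dpStar ∈ V) :
    doubleSet (projSet V) = V := by
  ext x
  rcases eq_dp0_or_eq_dp1_or_eq_dpStar x with ⟨a, rfl⟩ | ⟨a, rfl⟩ | rfl
  · rw [dp0_mem_doubleSet, hV.mem_projSet_iff hstar]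
  · rw [dp1_mem_doubleSet, hV.mem_projSet_iff hstar, hV.dp0_mem_iff_dp1_mem hstar]
  · simp [hstar]

end IsSub

theorem IsSTS.generatedSub_doubleTriples (hT : IsSTS T) (hs : dpStar ∈ s) :
    GeneratedSub (DoubleTriples T) s = doubleSet (GeneratedSub T (projSet s)) := by
  have hstar : dpStar ∈ GeneratedSub (DoubleTriples T) s := subset_generatedSub hs
  refine (generatedSub_subset (hT.isSub_doubleSet isSub_generatedSub)
    (subset_doubleSet_iff.2 subset_generatedSub)).antisymm ?_
  calc doubleSet (GeneratedSub T (projSet s))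
      ⊆ doubleSet (projSet (GeneratedSub (DoubleTriples T) s)) :=
        doubleSet_mono (generatedSub_subset (isSub_generatedSub.isSub_projSet hstar)
          (projSet_mono subset_generatedSub))
    _ = GeneratedSub (DoubleTriples T) s := isSub_generatedSub.doubleSet_projSet hstar

end DoubleSet

section Coordinates

variable {β : Type*} {T : Finset (Finset β)} {W : Finset β} {n : ℕ} {f : β → Fin (n + 1) → ZMod 2}

/-- Homogeneous coordinates identifying `W` with `PG(n,2)`: the points of `W` correspond to the
nonzero vectors, and the points of each triple inside `W` to vectors with sum zero. -/
def PGCoordinates (n : ℕ) (T : Finset (Finset β)) (W : Finset β)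
    (f : β → Fin (n + 1) → ZMod 2) : Prop :=
  Set.BijOn f W {0}ᶜ ∧ ∀ t ∈ T, t ⊆ W → ∑ x ∈ t, f x = 0

theorem PGCoordinates.isPGSub [Fintype β] (hT : IsSTS T) (hW : IsSub T W)
    (hf : PGCoordinates n T W f) : IsPGSub n T W := by
  choose φ hφW hfφ using fun v : PGPoint n => hf.1.surjOn v.2
  have hφ : Function.Injective φ := fun u v h => Subtype.ext (by rw [← hfφ u, ← hfφ v, h])
  have hφf {x : β} (hx : x ∈ W) {v : PGPoint n} (hv : f x = v) : φ v = x :=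
    hf.1.injOn (hφW v) hx ((hfφ v).trans hv.symm)
  have himage : univ.image φ = W := by
    ext x
    simp only [mem_image, mem_univ, true_and]
    exact ⟨fun ⟨v, hv⟩ => hv ▸ hφW v, fun hx => ⟨⟨f x, hf.1.mapsTo hx⟩, hφf hx rfl⟩⟩
  refine ⟨φ, ⟨hφ, fun t ht => ?_, fun t ht htW => ?_⟩, himage⟩
  · obtain ⟨hcard, hsum⟩ := (mem_filter.1 ht).2
    obtain ⟨u, v, w, huv, huw, hvw, rfl⟩ := card_eq_three.1 hcard
    obtain ⟨c, hcu, hcv, hc⟩ := hT.exists_triple_mem (hφ.ne huv)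
    have hcW : {φ u, φ v, c} ⊆ W := isSub_iff.1 hW _ hc _ (by simp) _ (by simp) (hφ.ne huv)
      (hφW u) (hφW v)
    have hfc : f c = w := by
      have hsum' := hf.2 _ hc hcW
      rw [sum_insert (by simp [huv, huw]), sum_pair hvw] at hsum
      rw [sum_insert (by simp [hφ.ne huv, hcu.symm]), sum_pair hcv.symm, hfφ, hfφ] at hsum'
      exact add_left_cancel (add_left_cancel (hsum'.trans hsum.symm))
    rw [image_insert, image_insert, image_singleton, hφf (hcW (by simp)) hfc]
    exact hc
  · obtain ⟨s, -, rfl⟩ := subset_image_iff.1 htW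
    refine ⟨s, mem_filter.2 ⟨mem_univ s, ?_, ?_⟩, rfl⟩
    · rw [← hT.1 _ ht, card_image_of_injective s hφ]
    · have hsum := hf.2 _ ht (htW.trans_eq himage)
      simpa only [sum_image hφ.injOn, hfφ] using hsum

/-- The coordinates on `2Y+1` induced by coordinates on `Y`: the new coordinate is `0` on `Y` and
`1` on `Y₁`, and `*` is the point whose old coordinates all vanish. -/
def doubleCoordinates (f : β → Fin (n + 1) → ZMod 2) : β ⊕ β ⊕ Unit → Fin (n + 2) → ZMod 2 :=
  Sum.elim (fun a => Matrix.vecCons 0 (f a))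
    (Sum.elim (fun a => Matrix.vecCons 1 (f a)) fun _ => Matrix.vecCons 1 0)

@[simp] theorem doubleCoordinates_dp0 (f : β → Fin (n + 1) → ZMod 2) (a : β) :
    doubleCoordinates f (dp0 a) = Matrix.vecCons 0 (f a) := rfl

@[simp] theorem doubleCoordinates_dp1 (f : β → Fin (n + 1) → ZMod 2) (a : β) :
    doubleCoordinates f (dp1 a) = Matrix.vecCons 1 (f a) := rfl

@[simp] theorem doubleCoordinates_dpStar (f : β → Fin (n + 1) → ZMod 2) :
    doubleCoordinates f dpStar = Matrix.vecCons 1 0 := rfl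

theorem bijOn_doubleCoordinates (hf : Set.BijOn f W {0}ᶜ) :
    Set.BijOn (doubleCoordinates f) (doubleSet W) {0}ᶜ := by
  have hf0 {a} (ha : a ∈ W) : f a ≠ 0 := hf.mapsTo ha
  refine ⟨fun x hx => ?_, fun x hx y hy hxy => ?_, fun v hv => ?_⟩
  · rcases eq_dp0_or_eq_dp1_or_eq_dpStar x with ⟨a, rfl⟩ | ⟨a, rfl⟩ | rfl
    · simpa using hf0 (dp0_mem_doubleSet.1 hx)
    all_goals simp
  · rcases eq_dp0_or_eq_dp1_or_eq_dpStar x with ⟨a, rfl⟩ | ⟨a, rfl⟩ | rfl <;>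
      rcases eq_dp0_or_eq_dp1_or_eq_dpStar y with ⟨b, rfl⟩ | ⟨b, rfl⟩ | rfl <;>
      simp only [mem_coe, dp0_mem_doubleSet, dp1_mem_doubleSet, doubleCoordinates_dp0,
        doubleCoordinates_dp1, doubleCoordinates_dpStar, Matrix.vecCons_inj, zero_ne_one,
        one_ne_zero, false_and, true_and] at hx hy hxy
    · rw [hf.injOn hx hy hxy]
    · rw [hf.injOn hx hy hxy]
    · exact absurd hxy (hf0 hx)
    · exact absurd hxy.symm (hf0 hy)
    · rfl
  · obtain ⟨c, w, rfl⟩ : ∃ c w, v = Matrix.vecCons c w :=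
    ⟨Matrix.vecHead v, Matrix.vecTail v, (Matrix.cons_head_tail v).symm⟩
    have h01 : ∀ c : ZMod 2, c = 0 ∨ c = 1 := by decide
    rcases eq_or_ne w 0 with rfl | hw
    · rcases h01 c with rfl | rfl
      · exact absurd Matrix.cons_zero_zero hv
      · exact ⟨dpStar, by simp, rfl⟩
    · obtain ⟨a, ha, rfl⟩ := hf.surjOn hw
      rcases h01 c with rfl | rfl
      exacts [⟨dp0 a, by simpa using ha, rfl⟩, ⟨dp1 a, by simpa using ha, rfl⟩]

theorem sum_cons_zero {ι : Type*} (s : Finset ι) (g : ι → Fin (n + 1) → ZMod 2) :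
    ∑ x ∈ s, Matrix.vecCons 0 (g x) = Matrix.vecCons 0 (∑ x ∈ s, g x) := by
  funext i
  refine Fin.cases ?_ (fun i => ?_) i <;> simp

theorem PGCoordinates.double [Fintype β] (hT : IsSTS T) (hf : PGCoordinates n T W f) :
    PGCoordinates (n + 1) (DoubleTriples T) (doubleSet W) (doubleCoordinates f) := by
  refine ⟨bijOn_doubleCoordinates hf.1, fun t ht htW => ?_⟩
  rcases mem_doubleTriples.1 ht with ⟨s, hs, rfl⟩ | ⟨a, rfl⟩ | ⟨a, b, c, h, rfl⟩
  · have hsum := hf.2 s hs fun a ha => dp0_mem_doubleSet.1 (htW (mem_image_of_mem _ ha))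
    rw [sum_image dp0_injective.injOn]
    simp only [doubleCoordinates_dp0, sum_cons_zero, hsum, Matrix.cons_zero_zero]
  · rw [sum_insert (by simp [dp0, dp1, dpStar]), sum_pair (by simp [dp0, dp1])]
    funext i
    refine Fin.cases ?_ (fun i => ?_) i <;> simp [CharTwo.add_self_eq_zero]
  · obtain ⟨hab, hac, hbc⟩ := hT.ne_of_triple_mem h
    have hsum := hf.2 _ h (by simpa [insert_subset_iff] using htW)
    rw [sum_insert (by simp [hab, hac]), sum_pair hbc] at hsum
    rw [sum_insert (by simp [dp0, dp1, hab]), sum_pair (by simp [dp0, dp1])]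
    funext i
    refine Fin.cases ?_ (fun i => ?_) i
    · simp [CharTwo.add_self_eq_zero]
    · simpa using congrFun hsum i

theorem pgCoordinates_singleton (hT : IsSTS T) (a : β) : PGCoordinates 0 T {a} fun _ => 1 := by
  refine ⟨⟨by simp [Set.MapsTo], by simp, fun v hv => ?_⟩, fun t ht hta => ?_⟩
  · have hv1 : ∀ v : Fin 1 → ZMod 2, v ≠ 0 → v = 1 := by decide
    simp [hv1 v hv]
  · have hcard := card_le_card hta
    rw [hT.1 t ht, card_singleton] at hcard
    omega

theorem exists_pgCoordinates_triple (hT : IsSTS T) {a b c : β} (h : {a, b, c} ∈ T) :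
    ∃ f, PGCoordinates 1 T {a, b, c} f := by
  obtain ⟨hab, hac, hbc⟩ := hT.ne_of_triple_mem h
  obtain ⟨u, v, w, ⟨huv, huw, hvw⟩, hsum, hpoints⟩ : ∃ u v w : Fin 2 → ZMod 2,
      (u ≠ v ∧ u ≠ w ∧ v ≠ w) ∧ u + (v + w) = 0 ∧ ∀ x, x ≠ 0 ↔ x = u ∨ x = v ∨ x = w :=
    ⟨![1, 0], ![0, 1], ![1, 1], by decide⟩
  obtain ⟨f, ha, hb, hc⟩ : ∃ f : β → Fin 2 → ZMod 2, f a = u ∧ f b = v ∧ f c = w :=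
    ⟨fun x => if x = a then u else if x = b then v else w, by simp [hab.symm, hac.symm, hbc.symm]⟩
  refine ⟨f, ⟨?_, ?_, fun x hx => ?_⟩, fun t ht htW => ?_⟩
  · simp [Set.MapsTo, hpoints, ha, hb, hc]
  · rintro x hx y hy hxy
    simp only [mem_coe, mem_insert, mem_singleton] at hx hy
    rcases hx with rfl | rfl | rfl <;> rcases hy with rfl | rfl | rfl <;> simp_all
  · rcases (hpoints x).1 hx with rfl | rfl | rfl
    exacts [⟨a, by simp, ha⟩, ⟨b, by simp, hb⟩, ⟨c, by simp, hc⟩]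
  · obtain rfl := eq_of_subset_of_card_le htW (by rw [hT.1 t ht, hT.1 _ h])
    rw [sum_insert (by simp [hab, hac]), sum_pair hbc, ha, hb, hc, hsum]

end Coordinates

section TwoPointed

variable {β : Type*} [Fintype β] {T : Finset (Finset β)} {W : Finset β}

theorem PGCoordinates.isPGSub_double_double {n : ℕ} {f : β → Fin (n + 1) → ZMod 2}
    (hT : IsSTS T) (hW : IsSub T W) (hf : PGCoordinates n T W f) :
    IsPGSub (n + 2) (DoubleTriples (DoubleTriples T)) (doubleSet (doubleSet W)) :=
  ((hf.double hT).double hT.doubleTriples).isPGSub hT.doubleTriples.doubleTriples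
    (hT.doubleTriples.isSub_doubleSet (hT.isSub_doubleSet hW))

theorem IsSTS.exists_pgCoordinates_generatedSub (hT : IsSTS T) {P : Finset β} (hP : P.Nonempty)
    (hP2 : P.card ≤ 2) :
    (∃ f, PGCoordinates 0 T (GeneratedSub T P) f) ∨
      ∃ f, PGCoordinates 1 T (GeneratedSub T P) f := by
  obtain h1 | h2 : P.card = 1 ∨ P.card = 2 := by have := hP.card_pos; omega
  · obtain ⟨a, rfl⟩ := card_eq_one.1 h1
    rw [generatedSub_singleton]
    exact Or.inl ⟨_, pgCoordinates_singleton hT a⟩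
  · obtain ⟨a, b, hab, rfl⟩ := card_eq_two.1 h2
    obtain ⟨c, -, -, hc⟩ := hT.exists_triple_mem hab
    rw [hT.generatedSub_pair hab hc]
    exact Or.inr (exists_pgCoordinates_triple hT hc)

theorem IsSTS.pg32TwoPointed_double_double (hT : IsSTS T) :
    PG32TwoPointed (DoubleTriples (DoubleTriples T)) dpStar (dp0 dpStar) := by
  refine ⟨by simp [dp0, dpStar], fun s hcard hstar hstar' => ?_⟩
  have hproj : dpStar ∈ projSet s := mem_projSet.2 (Or.inl hstar')
  have hle : (projSet (projSet s)).card ≤ 2 := by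
    have := card_projSet_lt hproj
    have := card_projSet_lt hstar
    omega
  have hne : (projSet (projSet s)).Nonempty := by
    by_contra! hempty
    have hsub : s ⊆ doubleSet (doubleSet ∅) :=
      subset_doubleSet_iff.2 (subset_doubleSet_iff.2 hempty.subset)
    have hle3 := card_le_card hsub
    simp only [card_doubleSet, card_empty] at hle3
    omega
  rw [hT.doubleTriples.generatedSub_doubleTriples hstar, hT.generatedSub_doubleTriples hproj]
  exact (hT.exists_pgCoordinates_generatedSub hne hle).imp
    (fun ⟨_, hf⟩ => hf.isPGSub_double_double hT isSub_generatedSub)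
    (fun ⟨_, hf⟩ => hf.isPGSub_double_double hT isSub_generatedSub)

end TwoPointed

end

/-- **Lemma 2.2(ii).** Every Steiner triple system `Y₁` with at least 3 points is a
subsystem of the Steiner triple system `Z = 2(2Y₁+1)+1` on `4|Y₁|+3` points, which is
`PG(3,2)`-2-pointed with respect to some pair of points; moreover
`4|Y₁|+3 ≡ 7 (mod 8)`. -/
theorem stmt5 {γ : Type*} [Fintype γ] (T : Finset (Finset γ)) (hT : IsSTS T)
    (h3 : 3 ≤ Fintype.card γ) :
    (IsCopy T (DoubleTriples (DoubleTriples T)) fun a => dp0 (dp0 a)) ∧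
    IsSub (DoubleTriples (DoubleTriples T))
      (Finset.univ.image fun a : γ => dp0 (dp0 a)) ∧
    (∃ p q : (γ ⊕ γ ⊕ Unit) ⊕ (γ ⊕ γ ⊕ Unit) ⊕ Unit,
      PG32TwoPointed (DoubleTriples (DoubleTriples T)) p q) ∧
    Fintype.card ((γ ⊕ γ ⊕ Unit) ⊕ (γ ⊕ γ ⊕ Unit) ⊕ Unit) = 4 * Fintype.card γ + 3 ∧
    (4 * Fintype.card γ + 3) % 8 = 7 := by
  have hD := hT.doubleTriples.doubleTriples
  have hcopy : IsCopy T (DoubleTriples (DoubleTriples T)) fun a => dp0 (dp0 a) :=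
    (isCopy_dp0 (DoubleTriples T)).comp (isCopy_dp0 T)
  have : Nonempty γ := Fintype.card_pos_iff.1 (by omega)
  refine ⟨hcopy, ?_, ⟨dpStar, dp0 dpStar, hT.pg32TwoPointed_double_double⟩, ?_, ?_⟩
  · convert hcopy.isSub_image hT hD
  · simp only [Fintype.card_sum, Fintype.card_unit]
    ring
  · obtain ⟨k, hk⟩ := hT.odd_card
    omega

end
end

section
/- Let n ≥ 1 and let S be a Steiner triple system with |S| < 2^n − 1. If f is a map from the points of PG(n−1,2) to the points of S such that for every line {p,q,r} of PG(n−1,2) the image set {f(p),f(q),f(r)} is either a single point of S or a triple of S, then f is constant (its image has size 1). -/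
open Finset

noncomputable section
open scoped Classical

/-!
On a line of a projective space over `GF(2)`, the images of two of its points under a map sending
lines to points or triples determine the image of the third. Suppose `f p = f q` with `p ≠ q` and
let `y` be a third point. The lines through `p, y` and through `q, y` have third points `p + y` and
`q + y`, so `f (p + y) = f (q + y)`. The line `{p + y, q + y, p + q}` is therefore sent to a single
point, and so is `{p, q, p + q}`; hence `f (p + y) = f (p + q) = f p`, and the line
`{p, p + y, y}` yields `f y = f p`. So `f` is injective or constant.
-/

section CharTwoModule

variable {V : Type*} [AddCommGroup V] [Module (ZMod 2) V]

lemma add_ne_zero_of_ne {v w : V} (h : v ≠ w) : v + w ≠ 0 := by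
  rwa [← ZModModule.sub_eq_add, sub_ne_zero]

lemma ne_of_add_add_eq_zero {u v w : V} (hw : w ≠ 0) (h : u + v + w = 0) : u ≠ v := by
  rintro rfl
  rw [ZModModule.add_self, zero_add] at h
  exact hw h

end CharTwoModule

section TripleSystem

variable {α : Type*} {T : Finset (Finset α)}

lemma IsSTS.isPSTS (hT : IsSTS T) : IsPSTS T :=
  ⟨hT.1, fun p q hpq _ ht₁ _ ht₂ hp₁ hq₁ hp₂ hq₂ =>
    (hT.2 p q hpq).unique ⟨ht₁, hp₁, hq₁⟩ ⟨ht₂, hp₂, hq₂⟩⟩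

lemma IsPSTS.eq_of_triple_mem (hT : IsPSTS T) {a b c d : α}
    (hc : {a, b, c} ∈ T) (hd : {a, b, d} ∈ T) : c = d := by
  obtain ⟨hab, hac, hbc⟩ := Finset.card_triple_eq_three_iff.mp (hT.1 _ hc)
  have htriple : ({a, b, c} : Finset α) = {a, b, d} :=
    hT.2 a b hab _ hc _ hd (by simp) (by simp) (by simp) (by simp)
  have hmem : c ∈ ({a, b, d} : Finset α) := htriple ▸ by simp
  simpa [hac.symm, hbc.symm] using hmem

end TripleSystem

/-- A map `f` from the points of the projective space of a vector space `V` over `GF(2)` to the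
points of a triple system `T` which sends every line to a single point or to a triple. The points
are the nonzero vectors, and `{p, q, r}` is a line if and only if `p + q + r = 0`: three nonzero
vectors with zero sum are automatically distinct. -/
def MapsLinesToPointsOrTriples {V α : Type*} [AddCommGroup V] (T : Finset (Finset α))
    (f : {x : V // x ≠ 0} → α) : Prop :=
  ∀ p q r : {x : V // x ≠ 0}, (p + q + r : V) = 0 → (f p = f q ∧ f q = f r) ∨ {f p, f q, f r} ∈ T

namespace MapsLinesToPointsOrTriples

variable {V α : Type*} [AddCommGroup V] {T : Finset (Finset α)} {f : {x : V // x ≠ 0} → α}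

lemma map_third_eq_of_map_eq (hf : MapsLinesToPointsOrTriples T f) (hT : ∀ t ∈ T, t.card = 3)
    {p q r : {x : V // x ≠ 0}} (hpqr : (p + q + r : V) = 0) (hpq : f p = f q) : f r = f p := by
  rcases hf p q r hpqr with ⟨-, hqr⟩ | htriple
  · exact (hpq.trans hqr).symm
  · exact absurd hpq (Finset.card_triple_eq_three_iff.mp (hT _ htriple)).1

lemma map_third_eq_map_third (hf : MapsLinesToPointsOrTriples T f) (hT : IsPSTS T)
    {p q r p' q' r' : {x : V // x ≠ 0}} (h : (p + q + r : V) = 0) (h' : (p' + q' + r' : V) = 0)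
    (hp : f p = f p') (hq : f q = f q') : f r = f r' := by
  by_cases hpq : f p = f q
  · have hpq' : f p' = f q' := by rw [← hp, hpq, hq]
    rw [hf.map_third_eq_of_map_eq hT.1 h hpq, hp, hf.map_third_eq_of_map_eq hT.1 h' hpq']
  · have htriple : {f p, f q, f r} ∈ T := (hf p q r h).resolve_left fun h => hpq h.1
    have htriple' : {f p, f q, f r'} ∈ T := by
      rw [hp, hq] at hpq ⊢
      exact (hf p' q' r' h').resolve_left fun h => hpq h.1
    exact hT.eq_of_triple_mem htriple htriple'

lemma map_eq_of_map_eq_of_ne [Module (ZMod 2) V] (hf : MapsLinesToPointsOrTriples T f)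
    (hT : IsPSTS T) {p q : {x : V // x ≠ 0}} (hpq : p ≠ q) (hfpq : f p = f q)
    (y : {x : V // x ≠ 0}) : f y = f p := by
  obtain rfl | hyp := eq_or_ne y p
  · rfl
  obtain rfl | hyq := eq_or_ne y q
  · exact hfpq.symm
  have add_self (v : V) : v + v = 0 := ZModModule.add_self v
  let r : {x : V // x ≠ 0} := ⟨p + q, add_ne_zero_of_ne (Subtype.coe_ne_coe.mpr hpq)⟩
  let u : {x : V // x ≠ 0} := ⟨p + y, add_ne_zero_of_ne (Subtype.coe_ne_coe.mpr hyp.symm)⟩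
  let v : {x : V // x ≠ 0} := ⟨y + q, add_ne_zero_of_ne (Subtype.coe_ne_coe.mpr hyq)⟩
  have hpqr : (p + q + r : V) = 0 := add_self _
  have hpyu : (p + y + u : V) = 0 := add_self _
  have hqyv : (q + y + v : V) = 0 := by rw [add_comm (q : V) y, add_self]
  have huvr : (u + v + r : V) = 0 := by
    have huv : (u + v : V) = r := ZModModule.add_add_add_cancel _ _ _
    rw [huv, add_self]
  have hpuy : (p + u + y : V) = 0 := by rw [add_right_comm, hpyu]
  have hfuv : f u = f v := hf.map_third_eq_map_third hT hpyu hqyv hfpq rfl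
  have hfpu : f p = f u :=
    calc f p = f r := (hf.map_third_eq_of_map_eq hT.1 hpqr hfpq).symm
      _ = f u := hf.map_third_eq_of_map_eq hT.1 huvr hfuv
  exact hf.map_third_eq_of_map_eq hT.1 hpuy hfpu

end MapsLinesToPointsOrTriples

section PG

variable {n : ℕ}

lemma card_PGPoint : Fintype.card (PGPoint n) = 2 ^ (n + 1) - 1 := by
  rw [Fintype.card_subtype_compl, Fintype.card_subtype_eq]
  simp [ZMod.card]

lemma triple_mem_PGTriples {p q r : PGPoint n} (h : p.1 + q.1 + r.1 = 0) :
    {p, q, r} ∈ PGTriples n := by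
  have hpq : p ≠ q := Subtype.coe_ne_coe.mp (ne_of_add_add_eq_zero r.2 h)
  have hpr : p ≠ r := Subtype.coe_ne_coe.mp <|
    ne_of_add_add_eq_zero q.2 ((add_right_comm _ _ _).trans h)
  have hqr : q ≠ r := Subtype.coe_ne_coe.mp <|
    ne_of_add_add_eq_zero p.2 ((add_rotate _ _ _).symm.trans h)
  refine Finset.mem_filter.mpr
    ⟨Finset.mem_univ _, Finset.card_triple_eq_three_iff.mpr ⟨hpq, hpr, hqr⟩, ?_⟩
  rw [Finset.sum_insert (by simp [hpq, hpr]), Finset.sum_pair hqr, ← add_assoc, h]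

lemma mapsLinesToPointsOrTriples_of_PGTriples {α : Type*} {T : Finset (Finset α)}
    {f : PGPoint n → α} (hf : ∀ t ∈ PGTriples n, (t.image f).card = 1 ∨ t.image f ∈ T) :
    MapsLinesToPointsOrTriples T f := by
  intro p q r h
  have hline := hf _ (triple_mem_PGTriples h)
  rw [Finset.image_insert, Finset.image_insert, Finset.image_singleton] at hline
  refine hline.imp_left fun hpoint => ?_
  have heq := Finset.card_le_one.mp hpoint.le
  exact ⟨heq _ (by simp) _ (by simp), heq _ (by simp) _ (by simp)⟩

end PG

theorem stmt7_general {V α : Type*} [AddCommGroup V] [Module (ZMod 2) V] {T : Finset (Finset α)}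
    (hT : IsPSTS T) {f : {x : V // x ≠ 0} → α} (hf : MapsLinesToPointsOrTriples T f) :
    Function.Injective f ∨ ∀ p q, f p = f q := by
  refine or_iff_not_imp_left.mpr fun hinj x y => ?_
  obtain ⟨p, q, hfpq, hpq⟩ := Function.not_injective_iff.mp hinj
  rw [hf.map_eq_of_map_eq_of_ne hT hpq hfpq x, hf.map_eq_of_map_eq_of_ne hT hpq hfpq y]

/-- **Remark 2.4 (key claim).** Let `n ≥ 1` and let `S` be a Steiner triple system
with `|S| < 2^n − 1`.  Any map from `PG(n−1,2)` to `S` sending each line to a single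
point or a triple of `S` is constant. -/
theorem stmt7 {α : Type*} [Fintype α] (n : ℕ) (hn : 1 ≤ n)
    (TS : Finset (Finset α)) (hS : IsSTS TS)
    (hcard : Fintype.card α < 2 ^ n - 1) (f : PGPoint (n - 1) → α)
    (hf : ∀ t ∈ PGTriples (n - 1), (t.image f).card = 1 ∨ t.image f ∈ TS) :
    ∀ p q : PGPoint (n - 1), f p = f q := by
  rw [← Nat.sub_add_cancel hn, ← card_PGPoint] at hcard
  exact (stmt7_general hS.isPSTS (mapsLinesToPointsOrTriples_of_PGTriples hf)).resolve_left
    fun hinj => (Fintype.card_le_of_injective f hinj).not_gt hcard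

end
end

section
/- In Moore's construction U = X ∪ (V × A), assume the cyclic group A has even order, Y is PG(2,2)-paired, and |Y| − |X| > 6|V|. Then every subsystem W of U isomorphic to Y equals Y_v for some v ∈ V. -/
open Finset

noncomputable section
open scoped Classical

/-!
Call a line of `U` transversal if it is of kind (M3). In a Pasch configuration of four transversal
lines, opposite points have `A`-coordinates with equal squares: multiply the two lines through each
of them. Let `p`, `q` lie over different points of `V`, and consider a Fano plane of `U` through
them.

* If the plane is disjoint from `X`, its seven points lie over different points of `V`, so all its
  lines are transversal, and a Pasch configuration with `p`, `q` opposite gives `p² = q²`.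
* If the plane meets `X`, it contains a second point `p'` over the same point of `V` as `p`, and a
  Pasch configuration with `p`, `p'` opposite gives `p² = p'²`.

Here squares are taken of `A`-coordinates. An element of `A` has at most two square roots, so `p'`
is determined by `p`; the second case cannot occur for two different planes, as both would contain
the noncollinear points `p`, `q`, `p'`. Hence in a `PG(2,2)`-paired subsystem, points over different
points of `V` have equal squares. If points over two elements of `V` occur, each of them has at most
two points above it, too few for the given size.
-/

section Lines

variable {β' β : Type*} {T' : Finset (Finset β')} {T : Finset (Finset β)} {r' p q r : β}

/-- `p`, `q`, `r` are three distinct points on a common triple of `T`. Membership is used rather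
than `{p, q, r} ∈ T` so that the notion does not depend on a `DecidableEq` instance. -/
structure IsLine (T : Finset (Finset β)) (p q r : β) : Prop where
  ne₁₂ : p ≠ q
  ne₁₃ : p ≠ r
  ne₂₃ : q ≠ r
  exists_mem : ∃ l ∈ T, p ∈ l ∧ q ∈ l ∧ r ∈ l

lemma IsLine.swap (h : IsLine T p q r) : IsLine T q p r :=
  let ⟨l, hl, hp, hq, hr⟩ := h.exists_mem
  ⟨h.ne₁₂.symm, h.ne₂₃, h.ne₁₃, l, hl, hq, hp, hr⟩

lemma IsLine.rotate (h : IsLine T p q r) : IsLine T q r p :=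
  let ⟨l, hl, hp, hq, hr⟩ := h.exists_mem
  ⟨h.ne₂₃, h.ne₁₂.symm, h.ne₁₃.symm, l, hl, hq, hr, hp⟩

lemma IsSTS.isLine_of_mem (hT : IsSTS T) (h : {p, q, r} ∈ T) : IsLine T p q r := by
  have hcard := hT.1 _ h
  have hle : ∀ a b : β, #{a, b} ≤ 2 := fun _ _ => card_le_two
  refine ⟨?_, ?_, ?_, _, h, by simp, by simp, by simp⟩ <;> rintro rfl <;> grind

lemma IsSTS.exists_isLine (hT : IsSTS T) (h : p ≠ q) : ∃ r, IsLine T p q r := by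
  obtain ⟨l, ⟨hl, hp, hq⟩, -⟩ := hT.2 p q h
  obtain ⟨r, hr, hr'⟩ := exists_mem_notMem_of_card_lt_card (s := {p, q}) (t := l)
    (card_le_two.trans_lt (by rw [hT.1 l hl]; norm_num))
  exact ⟨r, h, by grind, by grind, l, hl, hp, hq, hr⟩

lemma IsSTS.eq_of_isLine (hT : IsSTS T) (h : IsLine T p q r) (h' : IsLine T p q r') : r = r' := by
  obtain ⟨l, hl, hp, hq, hr⟩ := h.exists_mem
  obtain ⟨l', hl', hp', hq', hr'⟩ := h'.exists_mem
  obtain rfl := (hT.2 p q h.ne₁₂).unique ⟨hl, hp, hq⟩ ⟨hl', hp', hq'⟩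
  have heq : {p, q, r} = l := eq_of_subset_of_card_le (by grind)
    (by rw [hT.1 l hl, card_eq_three.2 ⟨p, q, r, h.ne₁₂, h.ne₁₃, h.ne₂₃, rfl⟩])
  have := h'.ne₁₃
  have := h'.ne₂₃
  grind

/-- `f` maps lines of `T` to lines of `T'`. Such a map out of a Steiner triple system is
automatically injective, so this is a weak form of `IsCopy`. -/
def PreservesLines (T : Finset (Finset β)) (T' : Finset (Finset β')) (f : β → β') : Prop :=
  ∀ ⦃p q r⦄, IsLine T p q r → IsLine T' (f p) (f q) (f r)

lemma IsCopy.preservesLines [Fintype β] {f : β → β'} (hf : IsCopy T T' f) :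
    PreservesLines T T' f := by
  rintro p q r ⟨hpq, hpr, hqr, l, hl, hp, hq, hr⟩
  exact ⟨hf.1.ne hpq, hf.1.ne hpr, hf.1.ne hqr, l.image f, hf.2.1 l hl,
    mem_image_of_mem f hp, mem_image_of_mem f hq, mem_image_of_mem f hr⟩

lemma PreservesLines.injective {f : β → β'} (hT : IsSTS T) (hf : PreservesLines T T' f) :
    Function.Injective f := by
  intro p q h
  by_contra hpq
  obtain ⟨r, hr⟩ := hT.exists_isLine hpq
  exact (hf hr).ne₁₂ h

end Lines

section Fano

variable {β' β : Type*} {T' : Finset (Finset β')} {T : Finset (Finset β)}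

/-- The seven points form a Fano plane in `T`. The names record the vector sums that the points
are in `PG(2,2)`, with the frame `p`, `q`, `r`. -/
structure IsFano (T : Finset (Finset β)) (p q pq r pr qr pqr : β) : Prop where
  p_q : IsLine T p q pq
  p_r : IsLine T p r pr
  q_r : IsLine T q r qr
  pq_r : IsLine T pq r pqr
  p_qr : IsLine T p qr pqr
  q_pr : IsLine T q pr pqr
  pq_pr : IsLine T pq pr qr

lemma IsFano.map {f : β → β'} (hf : PreservesLines T T' f) {p q pq r pr qr pqr : β}
    (h : IsFano T p q pq r pr qr pqr) :
    IsFano T' (f p) (f q) (f pq) (f r) (f pr) (f qr) (f pqr) :=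
  ⟨hf h.1, hf h.2, hf h.3, hf h.4, hf h.5, hf h.6, hf h.7⟩

lemma IsFano.card_eq_seven {p q pq r pr qr pqr : β} (h : IsFano T p q pq r pr qr pqr) :
    #{p, q, pq, r, pr, qr, pqr} = 7 := by
  obtain ⟨⟨_, _, _, -⟩, ⟨_, _, _, -⟩, ⟨_, _, _, -⟩, ⟨_, _, _, -⟩, ⟨_, _, _, -⟩, ⟨_, _, _, -⟩,
    ⟨_, _, _, -⟩⟩ := h
  simp [*]

lemma isLine_PG_of_add_eq {n : ℕ} {x y z : PGPoint n} (hxy : x ≠ y) (h : x.1 + y.1 = z.1) :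
    IsLine (PGTriples n) x y z := by
  have hxz : x ≠ z := by
    rintro rfl
    exact y.2 (add_eq_left.1 h)
  have hyz : y ≠ z := by
    rintro rfl
    exact x.2 (add_eq_right.1 h)
  refine ⟨hxy, hxz, hyz, {x, y, z}, ?_, by simp, by simp, by simp⟩
  simp only [PGTriples, mem_filter, mem_univ, true_and]
  refine ⟨card_eq_three.2 ⟨x, y, z, hxy, hxz, hyz, rfl⟩, ?_⟩
  rw [sum_insert (by simp [hxy, hxz]), sum_pair hyz, ← add_assoc, h, CharTwo.add_self_eq_zero]

lemma exists_isFano_PG {n : ℕ} {x y z : PGPoint n} (hxy : x ≠ y) (hxz : x ≠ z) (hyz : y ≠ z)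
    (h : ¬ IsLine (PGTriples n) x y z) :
    ∃ xy xz yz xyz, IsFano (PGTriples n) x y xy z xz yz xyz := by
  have add_ne_zero {u v : PGPoint n} (huv : u ≠ v) : u.1 + v.1 ≠ 0 :=
    fun e => huv (Subtype.ext (CharTwo.add_eq_zero.1 e))
  have hsum : x.1 + y.1 ≠ z.1 := fun e => h (isLine_PG_of_add_eq hxy e)
  let xy : PGPoint n := ⟨x.1 + y.1, add_ne_zero hxy⟩
  have hxy_z : xy ≠ z := fun e => hsum (congrArg Subtype.val e)
  refine ⟨xy, ⟨x.1 + z.1, add_ne_zero hxz⟩, ⟨y.1 + z.1, add_ne_zero hyz⟩,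
    ⟨xy.1 + z.1, add_ne_zero hxy_z⟩, ?_, ?_, ?_, ?_, ?_, ?_, ?_⟩ <;>
  refine isLine_PG_of_add_eq ?_ ?_ <;> grind

variable [Fintype β] {W W₁ W₂ : Finset β} {p q r : β}

lemma IsPGSub.card_eq_seven (hW : IsPGSub 2 T W) : #W = 7 := by
  obtain ⟨φ, hφ, rfl⟩ := hW
  rw [card_image_of_injective _ hφ.1, card_univ]
  simp

lemma IsPGSub.exists_isFano {n : ℕ} (hW : IsPGSub n T W) (hp : p ∈ W) (hq : q ∈ W) (hr : r ∈ W)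
    (hpq : p ≠ q) (hpr : p ≠ r) (hqr : q ≠ r) (h : ¬ IsLine T p q r) :
    ∃ pq ∈ W, ∃ pr ∈ W, ∃ qr ∈ W, ∃ pqr ∈ W, IsFano T p q pq r pr qr pqr := by
  obtain ⟨φ, hφ, rfl⟩ := hW
  simp only [mem_image, mem_univ, true_and] at hp hq hr
  obtain ⟨⟨x, rfl⟩, ⟨y, rfl⟩, ⟨z, rfl⟩⟩ := And.intro hp (And.intro hq hr)
  obtain ⟨xy, xz, yz, xyz, hF⟩ := exists_isFano_PG (ne_of_apply_ne φ hpq) (ne_of_apply_ne φ hpr)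
    (ne_of_apply_ne φ hqr) (fun hl => h (hφ.preservesLines hl))
  exact ⟨φ xy, by simp, φ xz, by simp, φ yz, by simp, φ xyz, by simp, hF.map hφ.preservesLines⟩

lemma IsPGSub.exists_not_isLine (hT : IsSTS T) (hW : IsPGSub 2 T W) (hpq : p ≠ q) :
    ∃ r ∈ W, p ≠ r ∧ q ≠ r ∧ ¬ IsLine T p q r := by
  obtain ⟨s, hs⟩ := hT.exists_isLine hpq
  obtain ⟨r, hr, hr'⟩ := exists_mem_notMem_of_card_lt_card (s := {p, q, s}) (t := W)
    (card_le_three.trans_lt (by rw [hW.card_eq_seven]; norm_num))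
  exact ⟨r, hr, by grind, by grind, fun h => hr' (by simp [hT.eq_of_isLine h hs])⟩

lemma IsPGSub.eq_of_not_isLine (hT : IsSTS T) (hW₁ : IsPGSub 2 T W₁) (hW₂ : IsPGSub 2 T W₂)
    (hp : p ∈ W₁ ∩ W₂) (hq : q ∈ W₁ ∩ W₂) (hr : r ∈ W₁ ∩ W₂)
    (hpq : p ≠ q) (hpr : p ≠ r) (hqr : q ≠ r) (h : ¬ IsLine T p q r) : W₁ = W₂ := by
  simp only [mem_inter] at hp hq hr
  obtain ⟨pq, hpq₁, pr, hpr₁, qr, hqr₁, pqr, hpqr₁, hF₁⟩ :=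
    hW₁.exists_isFano hp.1 hq.1 hr.1 hpq hpr hqr h
  obtain ⟨_, hpq₂, _, hpr₂, _, hqr₂, _, hpqr₂, hF₂⟩ :=
    hW₂.exists_isFano hp.2 hq.2 hr.2 hpq hpr hqr h
  obtain rfl := hT.eq_of_isLine hF₁.p_q hF₂.p_q
  obtain rfl := hT.eq_of_isLine hF₁.p_r hF₂.p_r
  obtain rfl := hT.eq_of_isLine hF₁.q_r hF₂.q_r
  obtain rfl := hT.eq_of_isLine hF₁.pq_r hF₂.pq_r
  have eq_points {W : Finset β} (hW : IsPGSub 2 T W) (hsub : {p, q, pq, r, pr, qr, pqr} ⊆ W) :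
      {p, q, pq, r, pr, qr, pqr} = W :=
    eq_of_subset_of_card_le hsub (by rw [hW.card_eq_seven, hF₁.card_eq_seven])
  exact (eq_points hW₁ (by simp [insert_subset_iff, *])).symm.trans
    (eq_points hW₂ (by simp [insert_subset_iff, *]))

end Fano

lemma card_pow_eq_le_card_pow_eq_one {A : Type*} [CommGroup A] [Fintype A] (n : ℕ) (c : A) :
    #{b : A | b ^ n = c} ≤ #{b : A | b ^ n = 1} := by
  by_cases hc : c ∈ Set.range (powMonoidHom n : A →* A)
  · simpa only [powMonoidHom_apply] using
      (MonoidHom.card_fiber_eq_of_mem_range (powMonoidHom n) hc ⟨1, map_one _⟩).le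
  · rw [filter_eq_empty_iff.2 fun b _ (hb : b ^ n = c) => hc ⟨b, hb⟩]
    exact Nat.zero_le _

section Moore

variable {α A : Type*} [CommGroup A] {TV : Finset (Finset α)}

/-- The points `p`, `q`, `r` of `V × A` form a triple of kind (M3) of Moore's construction, with
distinct `V`-coordinates. -/
structure IsTransversal (TV : Finset (Finset α)) (p q r : α × A) : Prop where
  isLine : IsLine TV p.1 q.1 r.1
  mul_eq_one : p.2 * q.2 * r.2 = 1

lemma IsTransversal.sq_eq_sq {a b c d e f : α × A} (hace : IsTransversal TV a c e)
    (hadf : IsTransversal TV a d f) (hbcd : IsTransversal TV b c d)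
    (hbef : IsTransversal TV b e f) : a.2 ^ 2 = b.2 ^ 2 := by
  have ha : a.2 ^ 2 * (c.2 * d.2 * e.2 * f.2) = 1 := by
    calc _ = (a.2 * c.2 * e.2) * (a.2 * d.2 * f.2) := by rw [pow_two]; ac_rfl
      _ = 1 := by rw [hace.mul_eq_one, hadf.mul_eq_one, one_mul]
  have hb : b.2 ^ 2 * (c.2 * d.2 * e.2 * f.2) = 1 := by
    calc _ = (b.2 * c.2 * d.2) * (b.2 * e.2 * f.2) := by rw [pow_two]; ac_rfl
      _ = 1 := by rw [hbcd.mul_eq_one, hbef.mul_eq_one, one_mul]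
  exact mul_right_cancel (ha.trans hb.symm)

variable {δ γ : Type*} [Fintype δ] [Fintype α] [Fintype A] {TX : Finset (Finset δ)}
  {TY : Finset (Finset γ)} {j : δ → γ} {ℓ : A → γ}

lemma exists_eq_inr_of_isLine_inl {x : δ} {p : α × A} {r : δ ⊕ α × A}
    (h : IsLine (MooreTriples TX TV TY j ℓ) (.inl x) (.inr p) r) : ∃ b, r = .inr (p.1, b) := by
  obtain ⟨-, hxr, -, l, hl, hx, hp, hr⟩ := h
  simp only [MooreTriples, mem_filter, mem_univ, true_and] at hl
  rcases hl with ⟨s, -, rfl⟩ | ⟨v, a₁, a₂, x', -, rfl⟩ | ⟨v, a₁, a₂, a₃, -, rfl⟩ |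
    ⟨v₁, v₂, v₃, a₁, a₂, a₃, -, -, rfl⟩
  · simp at hp
  · obtain rfl : x = x' := by simpa using hx
    have hpv : p.1 = v := by
      simp only [mem_insert, mem_singleton, Sum.inr.injEq, reduceCtorEq, or_false] at hp
      rcases hp with rfl | rfl <;> rfl
    simp only [mem_insert, mem_singleton, hxr.symm, or_false] at hr
    exact hpv ▸ hr.elim (⟨a₁, ·⟩) (⟨a₂, ·⟩)
  · simp at hx
  · simp at hx

lemma exists_isTransversal_of_isLine (hV : IsSTS TV) {p q : α × A} {r : δ ⊕ α × A}
    (h : IsLine (MooreTriples TX TV TY j ℓ) (.inr p) (.inr q) r) (hpq : p.1 ≠ q.1) :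
    ∃ r', r = .inr r' ∧ IsTransversal TV p q r' := by
  obtain ⟨-, hpr, hqr, l, hl, hp, hq, hr⟩ := h
  simp only [MooreTriples, mem_filter, mem_univ, true_and] at hl
  rcases hl with ⟨s, -, rfl⟩ | ⟨v, a₁, a₂, x', -, rfl⟩ | ⟨v, a₁, a₂, a₃, -, rfl⟩ |
    ⟨v₁, v₂, v₃, a₁, a₂, a₃, hv, ha, rfl⟩
  · simp at hp
  · refine absurd ?_ hpq
    simp only [mem_insert, mem_singleton, Sum.inr.injEq, reduceCtorEq, or_false] at hp hq
    grind
  · refine absurd ?_ hpq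
    simp only [mem_insert, mem_singleton, Sum.inr.injEq] at hp hq
    grind
  · have hline := hV.isLine_of_mem hv
    obtain ⟨r', rfl⟩ : ∃ r', r = .inr r' := by
      simp only [mem_insert, mem_singleton] at hr
      rcases hr with rfl | rfl | rfl <;> exact ⟨_, rfl⟩
    replace hpr : p ≠ r' := ne_of_apply_ne _ hpr
    replace hqr : q ≠ r' := ne_of_apply_ne _ hqr
    have hne : p ≠ q := ne_of_apply_ne _ hpq
    have hpqr : ({p, q, r'} : Finset (α × A)) = {(v₁, a₁), (v₂, a₂), (v₃, a₃)} := by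
      refine eq_of_subset_of_card_le ?_ (card_le_three.trans ?_)
      · simpa [insert_subset_iff] using And.intro hp (And.intro hq hr)
      · exact (card_eq_three.2 ⟨p, q, r', hne, hpr, hqr, rfl⟩).ge
    refine ⟨r', rfl, hV.isLine_of_mem ?_, ?_⟩
    · have hfst := congrArg (image Prod.fst) hpqr
      simp only [image_insert, image_singleton] at hfst
      convert hv using 1
    · have hprod := congrArg (fun s => ∏ x ∈ s, x.2) hpqr
      simpa [hne, hpr, hqr, hline.ne₁₂, hline.ne₁₃, hline.ne₂₃, ← mul_assoc, ha] using hprod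

lemma isTransversal_of_isLine (hV : IsSTS TV) {p q r : α × A}
    (h : IsLine (MooreTriples TX TV TY j ℓ) (.inr p) (.inr q) (.inr r)) (hpq : p.1 ≠ q.1) :
    IsTransversal TV p q r := by
  obtain ⟨_, hr, ht⟩ := exists_isTransversal_of_isLine hV h hpq
  rwa [Sum.inr.inj hr]

lemma IsFano.fst_ne_fst (hV : IsSTS TV) {a b ab c ac bc : α × A} {abc : δ ⊕ α × A}
    (h : IsFano (MooreTriples TX TV TY j ℓ) (.inr a) (.inr b) (.inr ab) (.inr c) (.inr ac)
      (.inr bc) abc) (hac : a.1 ≠ c.1) : a.1 ≠ b.1 := by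
  intro hab
  have hline_a := (isTransversal_of_isLine hV h.p_r hac).isLine
  have hline_b := (isTransversal_of_isLine hV h.q_r (hab ▸ hac)).isLine
  have h_ac_bc : ac.1 = bc.1 := hV.eq_of_isLine hline_a (hab ▸ hline_b)
  have h_ab : ab.1 = a.1 := by
    by_contra hne
    exact (isTransversal_of_isLine hV h.p_q.rotate.rotate hne).isLine.ne₂₃ hab
  exact (isTransversal_of_isLine hV h.pq_pr (h_ab ▸ hline_a.ne₁₃)).isLine.ne₂₃ h_ac_bc

variable {ζ : Type*} [Fintype ζ] {T : Finset (Finset ζ)} {W : Finset ζ} {ψ : ζ → δ ⊕ α × A}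
  {y z : ζ}

lemma IsPGSub.injOn_fst (hV : IsSTS TV) (hψ : PreservesLines T (MooreTriples TX TV TY j ℓ) ψ)
    (hW : IsPGSub 2 T W) {g : ζ → α × A} (hg : ∀ w ∈ W, ψ w = .inr (g w))
    (hy : y ∈ W) (hz : z ∈ W) (hyz : (g y).1 ≠ (g z).1) : Set.InjOn (fun w => (g w).1) W := by
  intro s hs t ht (hst : (g s).1 = (g t).1)
  by_contra hne
  obtain ⟨c, hc, hsc⟩ : ∃ c ∈ W, (g s).1 ≠ (g c).1 := by
    by_cases hsy : (g s).1 = (g y).1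
    · exact ⟨z, hz, hsy ▸ hyz⟩
    · exact ⟨y, hy, hsy⟩
  have hoff : ¬ IsLine T s t c := by
    intro h
    have h' := hψ h.rotate.rotate
    rw [hg s hs, hg t ht, hg c hc] at h'
    exact (isTransversal_of_isLine hV h' hsc.symm).isLine.ne₂₃ hst
  obtain ⟨st, hst', sc, hsc', tc, htc', stc, -, hF⟩ := hW.exists_isFano hs ht hc hne
    (ne_of_apply_ne (fun w => (g w).1) hsc) (ne_of_apply_ne (fun w => (g w).1) (hst ▸ hsc)) hoff
  have hF' := hF.map hψ
  rw [hg s hs, hg t ht, hg c hc, hg st hst', hg sc hsc', hg tc htc'] at hF'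
  exact hF'.fst_ne_fst hV hsc hst

lemma IsPGSub.sq_eq_sq_of_inr (hT : IsSTS T) (hV : IsSTS TV)
    (hψ : PreservesLines T (MooreTriples TX TV TY j ℓ) ψ)
    (hW : IsPGSub 2 T W) {g : ζ → α × A} (hg : ∀ w ∈ W, ψ w = .inr (g w))
    (hy : y ∈ W) (hz : z ∈ W) (hyz : (g y).1 ≠ (g z).1) : (g y).2 ^ 2 = (g z).2 ^ 2 := by
  have hinj := hW.injOn_fst hV hψ hg hy hz hyz
  have htrans : ∀ s ∈ W, ∀ t ∈ W, ∀ u ∈ W, IsLine T s t u →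
      IsTransversal TV (g s) (g t) (g u) := by
    intro s hs t ht u hu h
    have h' := hψ h
    rw [hg s hs, hg t ht, hg u hu] at h'
    exact isTransversal_of_isLine hV h' (hinj.ne hs ht h.ne₁₂)
  have hne : y ≠ z := ne_of_apply_ne (fun w => (g w).1) hyz
  obtain ⟨r, hr, hyr, hzr, hoff⟩ := hW.exists_not_isLine hT hne
  obtain ⟨_, -, yr, hyr', zr, hzr', yzr, hyzr, hF⟩ :=
    hW.exists_isFano hy hz hr hne hyr hzr hoff
  exact (htrans y hy r hr yr hyr' hF.p_r).sq_eq_sq (htrans y hy zr hzr' yzr hyzr hF.p_qr)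
    (htrans z hz r hr zr hzr' hF.q_r) (htrans z hz yr hyr' yzr hyzr hF.q_pr)

lemma IsFano.exists_sq_eq_sq_of_inl (hV : IsSTS TV) {p q : α × A} {x : δ}
    {pq px qx pqx : δ ⊕ α × A}
    (h : IsFano (MooreTriples TX TV TY j ℓ) (.inr p) (.inr q) pq (.inl x) px qx pqx)
    (hpq : p.1 ≠ q.1) : ∃ b, px = .inr (p.1, b) ∧ b ≠ p.2 ∧ b ^ 2 = p.2 ^ 2 := by
  obtain ⟨pq, rfl, hline⟩ := exists_isTransversal_of_isLine hV h.p_q hpq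
  obtain ⟨b, rfl⟩ := exists_eq_inr_of_isLine_inl h.p_r.swap
  obtain ⟨c, rfl⟩ := exists_eq_inr_of_isLine_inl h.q_r.swap
  obtain ⟨d, rfl⟩ := exists_eq_inr_of_isLine_inl h.pq_r.swap
  refine ⟨b, rfl, ?_, ?_⟩
  · rintro rfl
    exact h.p_r.ne₁₃ rfl
  · have p_pq_q := isTransversal_of_isLine hV h.p_q.rotate.rotate.swap hline.isLine.ne₁₃
    have p_qx_pqx := isTransversal_of_isLine hV h.p_qr hpq
    have px_pq_qx := isTransversal_of_isLine hV h.pq_pr.swap hline.isLine.ne₁₃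
    have px_q_pqx := isTransversal_of_isLine hV h.q_pr.swap hpq
    exact (p_pq_q.sq_eq_sq p_qx_pqx px_pq_qx px_q_pqx).symm

lemma IsPGSub.sq_eq_sq_or_exists (hT : IsSTS T) (hV : IsSTS TV)
    (hψ : PreservesLines T (MooreTriples TX TV TY j ℓ) ψ) (hW : IsPGSub 2 T W) {p q : α × A}
    (hy : y ∈ W) (hz : z ∈ W) (hyp : ψ y = .inr p) (hzq : ψ z = .inr q) (hpq : p.1 ≠ q.1) :
    p.2 ^ 2 = q.2 ^ 2 ∨
      ∃ r ∈ W, ∃ b, ψ r = .inr (p.1, b) ∧ b ≠ p.2 ∧ b ^ 2 = p.2 ^ 2 := by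
  by_cases hX : ∃ w ∈ W, ∃ x, ψ w = .inl x
  · right
    obtain ⟨w, hw, x, hwx⟩ := hX
    have hoff : ¬ IsLine T y z w := by
      intro h
      have h' := hψ h
      rw [hyp, hzq, hwx] at h'
      obtain ⟨_, h', -⟩ := exists_isTransversal_of_isLine hV h' hpq
      cases h'
    obtain ⟨_, -, yw, hyw, _, -, _, -, hF⟩ := hW.exists_isFano hy hz hw
      (by rintro rfl; simp_all) (by rintro rfl; simp_all) (by rintro rfl; simp_all) hoff
    have hF' := hF.map hψ
    rw [hyp, hzq, hwx] at hF'
    exact ⟨yw, hyw, hF'.exists_sq_eq_sq_of_inl hV hpq⟩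
  · left
    have hinr : ∀ w, ∃ s, w ∈ W → ψ w = .inr s := by
      intro w
      rcases hw : ψ w with x | s
      · exact ⟨p, fun hwW => (hX ⟨w, hwW, x, hw⟩).elim⟩
      · exact ⟨s, fun _ => rfl⟩
    choose g hg using hinr
    obtain rfl : p = g y := Sum.inr.inj (hyp.symm.trans (hg y hy))
    obtain rfl : q = g z := Sum.inr.inj (hzq.symm.trans (hg z hz))
    exact hW.sq_eq_sq_of_inr hT hV hψ hg hy hz hpq

lemma PG22Paired.sq_eq_sq (hT : IsSTS T) (hV : IsSTS TV) (hA : #{a : A | a ^ 2 = 1} ≤ 2)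
    (hψ : PreservesLines T (MooreTriples TX TV TY j ℓ) ψ) (hpair : PG22Paired T) {p q : α × A}
    (hyp : ψ y = .inr p) (hzq : ψ z = .inr q) (hpq : p.1 ≠ q.1) : p.2 ^ 2 = q.2 ^ 2 := by
  by_contra hne
  have hyz : y ≠ z := by
    rintro rfl
    exact hpq (by rw [Sum.inr.inj (hyp.symm.trans hzq)])
  obtain ⟨W₁, W₂, hW, ⟨hy₁, hz₁, hW₁⟩, hy₂, hz₂, hW₂⟩ := hpair y z hyz
  obtain ⟨r₁, hr₁, b₁, hrb₁, hbp₁, hsq₁⟩ :=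
    (hW₁.sq_eq_sq_or_exists hT hV hψ hy₁ hz₁ hyp hzq hpq).resolve_left hne
  obtain ⟨r₂, hr₂, b₂, hrb₂, hbp₂, hsq₂⟩ :=
    (hW₂.sq_eq_sq_or_exists hT hV hψ hy₂ hz₂ hyp hzq hpq).resolve_left hne
  obtain rfl : b₁ = b₂ := by
    by_contra hb
    have hroots : 2 < #{b : A | b ^ 2 = p.2 ^ 2} := two_lt_card.2
      ⟨p.2, by simp, b₁, by simp [hsq₁], b₂, by simp [hsq₂], hbp₁.symm, hbp₂.symm, hb⟩
    exact hroots.not_ge ((card_pow_eq_le_card_pow_eq_one 2 _).trans hA)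
  obtain rfl : r₁ = r₂ := hψ.injective hT (hrb₁.trans hrb₂.symm)
  have hoff : ¬ IsLine T y z r₁ := by
    intro h
    have h' := hψ h
    rw [hyp, hzq, hrb₁] at h'
    exact (isTransversal_of_isLine hV h' hpq).isLine.ne₁₃ rfl
  have hyr : y ≠ r₁ := by
    rintro rfl
    exact hbp₁ (by rw [Sum.inr.inj (hyp.symm.trans hrb₁)])
  have hzr : z ≠ r₁ := by
    rintro rfl
    exact hpq (by rw [Sum.inr.inj (hzq.symm.trans hrb₁)])
  exact hW (hW₁.eq_of_not_isLine hT hW₂ (mem_inter.2 ⟨hy₁, hy₂⟩) (mem_inter.2 ⟨hz₁, hz₂⟩)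
    (mem_inter.2 ⟨hr₁, hr₂⟩) hyz hyr hzr hoff)

lemma PG22Paired.exists_image_subset_mooreY (hT : IsSTS T) (hV : IsSTS TV)
    (hA : #{a : A | a ^ 2 = 1} ≤ 2) (hψ : PreservesLines T (MooreTriples TX TV TY j ℓ) ψ)
    (hpair : PG22Paired T) (hcard : Fintype.card δ + 2 * Fintype.card α < Fintype.card ζ) :
    ∃ v, univ.image ψ ⊆ MooreY v := by
  set W := univ.image ψ with hW
  have hright : 2 * Fintype.card α < #W.toRight := by
    have hWcard : #W = Fintype.card ζ := card_image_of_injective _ (hψ.injective hT)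
    have := W.card_toLeft_add_card_toRight
    have := card_le_univ W.toLeft
    omega
  obtain ⟨v, -, hv⟩ := exists_lt_card_fiber_of_mul_lt_card_of_maps_to
    (s := W.toRight) (t := (univ : Finset α)) (f := Prod.fst) (n := 2)
    (fun _ _ => mem_univ _) (by rw [card_univ]; omega)
  have hfst : ∀ p, .inr p ∈ W → p.1 = v := by
    intro p hp
    by_contra hpv
    have hle : #{q ∈ W.toRight | q.1 = v} ≤ #{b : A | b ^ 2 = p.2 ^ 2} := by
      refine card_le_card_of_injOn Prod.snd ?_ ?_
      · intro q hq
        simp only [coe_filter, mem_toRight, Set.mem_ofPred_eq, hW, mem_image, mem_univ,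
          true_and] at hp hq
        obtain ⟨⟨y, hy⟩, ⟨z, hz⟩, hqv⟩ := And.intro hp hq
        simpa using hpair.sq_eq_sq hT hV hA hψ hz hy (hqv ▸ Ne.symm hpv)
      · intro q hq q' hq' e
        simp only [coe_filter, Set.mem_ofPred_eq] at hq hq'
        exact Prod.ext (hq.2.trans hq'.2.symm) e
    exact (hle.trans ((card_pow_eq_le_card_pow_eq_one 2 _).trans hA)).not_gt hv
  refine ⟨v, ?_⟩
  rintro (x | p) hp
  · simp [MooreY]
  · simp [MooreY, ← hfst p hp]

end Moore

lemma card_mooreY_le {δ α A : Type*} [Fintype δ] [Fintype A] (v : α) :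
    #(MooreY (δ := δ) (A := A) v) ≤ Fintype.card δ + Fintype.card A :=
  (card_union_le _ _).trans (Nat.add_le_add card_image_le card_image_le)

lemma MooreSetup.card_eq {δ α γ A : Type*} [Fintype δ] [Fintype γ] [Fintype A] [Group A]
    {TX : Finset (Finset δ)} {TV : Finset (Finset α)} {TY : Finset (Finset γ)} {j : δ → γ}
    {ℓ : A → γ} (hM : MooreSetup TX TV TY j ℓ) :
    Fintype.card γ = Fintype.card δ + Fintype.card A := by
  obtain ⟨-, -, -, hj, -, -, hℓ, hrange⟩ := hM
  have hcompl : IsCompl (Set.range j) (Set.range ℓ) := hrange ▸ isCompl_compl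
  have hbij : Function.Bijective (Sum.elim j ℓ) := by
    refine ⟨hj.sumElim hℓ fun x a h => ?_, ?_⟩
    · exact hcompl.disjoint.ne_of_mem ⟨x, rfl⟩ ⟨a, rfl⟩ h
    · rw [← Set.range_eq_univ, Set.Sum.elim_range]
      exact hcompl.sup_eq_top
  rw [← Fintype.card_of_bijective hbij, Fintype.card_sum]

theorem stmt11_general {δ α γ A ζ : Type*} [Fintype δ] [Fintype α] [Fintype A] [Fintype ζ]
    [CommGroup A] (hA : #{a : A | a ^ 2 = 1} ≤ 2) {TX : Finset (Finset δ)}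
    {TV : Finset (Finset α)} {TY : Finset (Finset γ)} {j : δ → γ} {ℓ : A → γ}
    {T : Finset (Finset ζ)} (hV : IsSTS TV) (hT : IsSTS T) (hpair : PG22Paired T)
    (hcard : Fintype.card δ + Fintype.card A ≤ Fintype.card ζ)
    (hgap : 2 * Fintype.card α < Fintype.card A) {ψ : ζ → δ ⊕ α × A}
    (hψ : PreservesLines T (MooreTriples TX TV TY j ℓ) ψ) :
    ∃ v, univ.image ψ = MooreY v := by
  obtain ⟨v, hv⟩ := hpair.exists_image_subset_mooreY hT hV hA hψ (by omega)
  refine ⟨v, eq_of_subset_of_card_le hv ?_⟩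
  rw [card_image_of_injective _ (hψ.injective hT), card_univ]
  exact (card_mooreY_le v).trans hcard

/-- **Proposition 3.5(i).** In Moore's construction with `A` of even order, `Y`
`PG(2,2)`-paired and `|Y| − |X| > 6|V|`, every subsystem of `U` isomorphic to `Y`
is of the form `Y_v`. -/
theorem stmt11 {δ α γ A : Type*} [Fintype δ] [Fintype α] [Fintype γ] [Fintype A]
    [Group A] (TX : Finset (Finset δ)) (TV : Finset (Finset α))
    (TY : Finset (Finset γ)) (j : δ → γ) (ℓ : A → γ)
    (hM : MooreSetup TX TV TY j ℓ)
    (hEven : Even (Fintype.card A)) (hPaired : PG22Paired TY)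
    (hgap : 6 * Fintype.card α < Fintype.card γ - Fintype.card δ)
    (W : Finset (δ ⊕ α × A)) (ψ : γ → δ ⊕ α × A)
    (hψ : IsCopy TY (MooreTriples TX TV TY j ℓ) ψ)
    (hWψ : Finset.univ.image ψ = W) :
    ∃ v : α, W = MooreY (δ := δ) (A := A) v := by
  have hcard := hM.card_eq
  obtain ⟨hY, hV, hcyc, -⟩ := hM
  let : CommGroup A := IsCyclic.commGroup
  have hA : #{a : A | a ^ 2 = 1} ≤ 2 := by
    convert IsCyclic.card_pow_eq_one_le (α := A) two_pos
  exact hWψ ▸ stmt11_general hA hV hY hPaired hcard.ge (by omega) hψ.preservesLines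

end
end

section
/- In Moore's construction U = X ∪ (V × A), assume the cyclic group A has even order and every point of V lies in a subsystem of V isomorphic to PG(3,2). If W is a subsystem of U isomorphic to V and W meets each subsystem Y_v (v ∈ V) in at most one point, then W = V_{V,f} = {(v,f(v)) : v ∈ V} for some map f : V → A_6 satisfying f(v1)f(v2)f(v3) = 1 for every triple {v1,v2,v3} of V. -/
open Finset

noncomputable section
open scoped Classical

/-!
Transversality makes `W` the graph of a map `f : V → A`. By (M3) a triple of `U` inside this graph
projects to a triple of `V` on which `f` has product `1`; since `W ≅ V`, the projections give `|TV|`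
distinct triples of `V`, that is, all of them. In a projective space over `GF(2)`, let `z` be a
point off the line through two points `x`, `y`. Multiplying the relations on the lines
`{x, z, x + z}` and `{x, y + z, x + y + z}` expresses `f(x)²` through the four points of
the plane off that line, so `f(x)² = f(y)²`. Squaring the relation on a line then gives `f(x)⁶ = 1`.
-/

theorem image_surjOn_of_image_mem {α : Type*} [DecidableEq α] {T : Finset (Finset α)} {σ : α → α}
    (hσ : Function.Injective σ) (hT : ∀ t ∈ T, t.image σ ∈ T) :
    Set.SurjOn (image σ) T T :=
  ((T.finite_toSet.injOn_iff_bijOn_of_mapsTo hT).1 (image_injective hσ).injOn).surjOn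

section ProdOne

variable {α β M : Type*} [CommMonoid M]

/-- `f` has product `1` on every triple of `T`; in Moore's construction these are the maps
defining the subsystems `V_{V,f}`. -/
def IsProdOne (T : Finset (Finset α)) (f : α → M) : Prop :=
  ∀ t ∈ T, ∏ v ∈ t, f v = 1

theorem prod_triple_of_card_eq_three [DecidableEq α] (f : α → M) {a b c : α}
    (h : #{a, b, c} = 3) : ∏ v ∈ {a, b, c}, f v = f a * f b * f c := by
  have hab : a ≠ b := by rintro rfl; have := card_le_two (a := a) (b := c); grind
  have hac : a ≠ c := by rintro rfl; have := card_le_two (a := a) (b := b); grind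
  have hbc : b ≠ c := by rintro rfl; have := card_le_two (a := a) (b := b); grind
  rw [prod_insert (by simp [hab, hac]), prod_pair hbc, mul_assoc]

theorem IsProdOne.comp [DecidableEq β] {S : Finset (Finset α)} {T : Finset (Finset β)} {f : β → M}
    (hf : IsProdOne T f) {φ : α → β} (hφ : Function.Injective φ)
    (hST : ∀ s ∈ S, s.image φ ∈ T) : IsProdOne S (f ∘ φ) := fun s hs => by
  simpa only [prod_image hφ.injOn, Function.comp_apply] using hf _ (hST s hs)

end ProdOne

section ProjectiveSpace

variable {α M : Type*} [CommMonoid M] {n : ℕ}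

theorem PGPoint.nontrivial (hn : n ≠ 0) : Nontrivial (PGPoint n) := by
  obtain ⟨m, rfl⟩ := Nat.exists_eq_succ_of_ne_zero hn
  refine ⟨⟨Pi.single 0 1, by simp⟩, ⟨Pi.single 1 1, by simp⟩, fun h => ?_⟩
  simpa using congrFun (Subtype.ext_iff.1 h) 0

theorem PGPoint.add_ne_zero {x y : PGPoint n} (h : x ≠ y) : x.1 + y.1 ≠ 0 := by
  rwa [Ne, CharTwo.add_eq_zero, ← Subtype.ext_iff]

theorem mem_PGTriples {t : Finset (PGPoint n)} :
    t ∈ PGTriples n ↔ #t = 3 ∧ ∑ v ∈ t, v.1 = 0 :=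
  mem_filter_univ t

theorem mem_PGTriples_of_add_eq_zero {x y z : PGPoint n} (h : x.1 + y.1 + z.1 = 0) :
    {x, y, z} ∈ PGTriples n := by
  have hxy : x ≠ y := by
    rintro rfl
    exact z.2 (by simpa [CharTwo.add_self_eq_zero] using h)
  have hxz : x ≠ z := by
    rintro rfl
    exact y.2 (by simpa [add_right_comm, CharTwo.add_self_eq_zero] using h)
  have hyz : y ≠ z := by
    rintro rfl
    exact x.2 (by simpa [add_assoc, CharTwo.add_self_eq_zero] using h)
  rw [mem_PGTriples, sum_insert (by simp [hxy, hxz]), sum_pair hyz, ← add_assoc]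
  exact ⟨card_eq_three.2 ⟨x, y, z, hxy, hxz, hyz, rfl⟩, h⟩

namespace IsProdOne

variable {g : PGPoint n → M}

theorem mul_mul_eq_one (hg : IsProdOne (PGTriples n) g) {x y z : PGPoint n}
    (h : x.1 + y.1 + z.1 = 0) : g x * g y * g z = 1 := by
  have hline := mem_PGTriples_of_add_eq_zero h
  rw [← prod_triple_of_card_eq_three g (mem_PGTriples.1 hline).1, hg _ hline]

theorem sq_eq_sq (hg : IsProdOne (PGTriples n) g) (hn : 2 ≤ n) (x y : PGPoint n) :
    g x ^ 2 = g y ^ 2 := by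
  have hcard : #{0, x.1, y.1, x.1 + y.1} < #(univ : Finset (Fin (n + 1) → ZMod 2)) := by
    simpa using card_le_four.trans_lt (Nat.pow_lt_pow_right one_lt_two (by omega : 2 < n + 1))
  obtain ⟨z, -, hz⟩ := exists_mem_notMem_of_card_lt_card hcard
  simp only [mem_insert, mem_singleton, not_or] at hz
  obtain ⟨hz0, hzx, hzy, hzxy⟩ := hz
  let p : PGPoint n := ⟨z, hz0⟩
  let q : PGPoint n := ⟨x.1 + z, by rwa [Ne, CharTwo.add_eq_zero, eq_comm]⟩
  let r : PGPoint n := ⟨y.1 + z, by rwa [Ne, CharTwo.add_eq_zero, eq_comm]⟩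
  let s : PGPoint n := ⟨x.1 + y.1 + z, by rwa [Ne, CharTwo.add_eq_zero, eq_comm]⟩
  have add_self (u : Fin (n + 1) → ZMod 2) : u + u = 0 := CharTwo.add_self_eq_zero u
  have hxpq : g x * g p * g q = 1 := hg.mul_mul_eq_one (by simp [p, q, add_self])
  have hxrs : g x * g r * g s = 1 := hg.mul_mul_eq_one (by simp [r, s, add_assoc, add_self])
  have hypr : g y * g p * g r = 1 := hg.mul_mul_eq_one (by simp [p, r, add_self])
  have hyqs : g y * g q * g s = 1 :=
    hg.mul_mul_eq_one (by simp [q, s, add_assoc, add_left_comm, add_self])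
  calc
    g x ^ 2 = g x ^ 2 * ((g y * g p * g r) * (g y * g q * g s)) := by
      rw [hypr, hyqs, mul_one, mul_one]
    _ = g y ^ 2 * ((g x * g p * g q) * (g x * g r * g s)) := by
      simp only [pow_two]; ac_rfl
    _ = g y ^ 2 := by rw [hxpq, hxrs, mul_one, mul_one]

theorem pow_six_eq_one (hg : IsProdOne (PGTriples n) g) (hn : 2 ≤ n) (x : PGPoint n) :
    g x ^ 6 = 1 := by
  have := PGPoint.nontrivial (n := n) (by omega)
  obtain ⟨y, hyx⟩ := exists_ne x
  let z : PGPoint n := ⟨x.1 + y.1, PGPoint.add_ne_zero hyx.symm⟩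
  calc
    g x ^ 6 = g x ^ 2 * g x ^ 2 * g x ^ 2 := by simp only [← pow_add]
    _ = g x ^ 2 * g y ^ 2 * g z ^ 2 := by
      rw [← hg.sq_eq_sq hn x y, ← hg.sq_eq_sq hn x z]
    _ = (g x * g y * g z) ^ 2 := by simp only [mul_pow]
    _ = 1 := by rw [hg.mul_mul_eq_one (CharTwo.add_self_eq_zero _), one_pow]

theorem pow_six_eq_one_of_mem_isPGSub [Fintype α] {T : Finset (Finset α)} {f : α → M}
    (hf : IsProdOne T f) (hn : 2 ≤ n) {S : Finset α} (hS : IsPGSub n T S) {v : α} (hv : v ∈ S) :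
    f v ^ 6 = 1 := by
  obtain ⟨φ, ⟨hφ, htriples, -⟩, rfl⟩ := hS
  obtain ⟨x, -, rfl⟩ := mem_image.1 hv
  exact (hf.comp hφ htriples).pow_six_eq_one hn x

end IsProdOne

theorem IsPGSub.nontrivial [Fintype α] {T : Finset (Finset α)} {S : Finset α}
    (hS : IsPGSub n T S) (hn : n ≠ 0) : Nontrivial α := by
  obtain ⟨φ, ⟨hφ, -⟩, -⟩ := hS
  have := PGPoint.nontrivial hn
  exact hφ.nontrivial

end ProjectiveSpace

section Moore

variable {δ α γ A : Type*} [Fintype δ] [Fintype A]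

theorem exists_transversal_of_mooreY_subsingleton [Finite α] {φ : α → δ ⊕ α × A}
    (hα : ∀ u : α, ∃ u', u' ≠ u)
    (hφ : ∀ v : α, {u | φ u ∈ MooreY (δ := δ) (A := A) v}.Subsingleton) :
    ∃ (f : α → A) (σ : α ≃ α), ∀ u, φ u = Sum.inr (σ u, f (σ u)) := by
  have mem_inr (w : α) (a : A) : (Sum.inr (w, a) : δ ⊕ α × A) ∈ MooreY w := by simp [MooreY]
  have mem_inl (x : δ) (v : α) : (Sum.inl x : δ ⊕ α × A) ∈ MooreY v := by simp [MooreY]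
  have exists_inr (u : α) : ∃ p : α × A, φ u = Sum.inr p := by
    rcases hu : φ u with x | p
    · obtain ⟨u', hne⟩ := hα u
      obtain ⟨v, hv⟩ : ∃ v, φ u' ∈ MooreY v := by
        rcases φ u' with x' | ⟨w, a⟩
        exacts [⟨u, mem_inl x' u⟩, ⟨w, mem_inr w a⟩]
      exact absurd (hφ v hv (hu ▸ mem_inl x v : φ u ∈ MooreY v)) hne
    · exact ⟨p, rfl⟩
  choose p hp using exists_inr
  have hmem (u : α) : φ u ∈ MooreY (p u).1 := hp u ▸ mem_inr _ _
  have hinj : Function.Injective fun u => (p u).1 := fun u u' (h : (p u).1 = (p u').1) =>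
    hφ (p u).1 (hmem u) (h ▸ hmem u' : φ u' ∈ MooreY (p u).1)
  let σ : α ≃ α := Equiv.ofBijective _ (Finite.injective_iff_bijective.1 hinj)
  refine ⟨fun v => (p (σ.symm v)).2, σ, fun u => ?_⟩
  simp only [σ.symm_apply_apply, hp]
  rfl

variable [Fintype α] [CommGroup A] {TX : Finset (Finset δ)} {TV : Finset (Finset α)}
  {TY : Finset (Finset γ)} {j : δ → γ} {ℓ : A → γ}

theorem mem_and_prod_eq_one_of_image_mem_mooreTriples (hTV : ∀ t ∈ TV, #t = 3) {f : α → A}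
    {s : Finset α} (hs : s.Nontrivial)
    (h : s.image (fun v => (Sum.inr (v, f v) : δ ⊕ α × A)) ∈ MooreTriples TX TV TY j ℓ) :
    s ∈ TV ∧ ∏ v ∈ s, f v = 1 := by
  obtain ⟨v, hv, w, hw, hvw⟩ := hs
  rw [MooreTriples, mem_filter_univ] at h
  rcases h with ⟨t, -, h⟩ | ⟨u, a₁, a₂, x, -, h⟩ | ⟨u, a₁, a₂, a₃, -, h⟩ |
    ⟨v₁, v₂, v₃, a₁, a₂, a₃, ht, ha, h⟩
  all_goals simp only [Finset.ext_iff, mem_image, mem_insert, mem_singleton] at h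
  · simpa using (h (Sum.inr (v, f v))).1 ⟨v, hv, rfl⟩
  · simpa using h (Sum.inl x)
  · have eq_base {v : α} (hv : v ∈ s) : v = u := by
      have := (h (Sum.inr (v, f v))).1 ⟨v, hv, rfl⟩
      grind
    exact absurd ((eq_base hv).trans (eq_base hw).symm) hvw
  · have mem_iff (v : α) (a : A) : v ∈ s ∧ f v = a ↔
        v = v₁ ∧ a = a₁ ∨ v = v₂ ∧ a = a₂ ∨ v = v₃ ∧ a = a₃ := by
      have := h (Sum.inr (v, a))
      grind
    obtain ⟨h₁, rfl⟩ := (mem_iff v₁ a₁).2 (by simp)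
    obtain ⟨h₂, rfl⟩ := (mem_iff v₂ a₂).2 (by simp)
    obtain ⟨h₃, rfl⟩ := (mem_iff v₃ a₃).2 (by simp)
    obtain rfl : s = {v₁, v₂, v₃} := by
      ext v
      have := mem_iff v (f v)
      simp only [mem_insert, mem_singleton]
      grind
    exact ⟨ht, (prod_triple_of_card_eq_three f (hTV _ ht)).trans ha⟩

theorem isProdOne_of_image_mem_mooreTriples (hTV : ∀ t ∈ TV, #t = 3) {f : α → A} {σ : α → α}
    (hσ : Function.Injective σ)
    (h : ∀ t ∈ TV, t.image (fun u => (Sum.inr (σ u, f (σ u)) : δ ⊕ α × A)) ∈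
      MooreTriples TX TV TY j ℓ) : IsProdOne TV f := by
  have hproj (t : Finset α) (ht : t ∈ TV) : t.image σ ∈ TV ∧ ∏ v ∈ t.image σ, f v = 1 := by
    refine mem_and_prod_eq_one_of_image_mem_mooreTriples (TX := TX) (TY := TY) (j := j) (ℓ := ℓ)
      hTV ?_ (by simpa only [image_image, Function.comp_def] using h t ht)
    rw [← one_lt_card_iff_nontrivial, card_image_of_injective t hσ, hTV t ht]
    norm_num
  intro s hs
  obtain ⟨t, ht, rfl⟩ := image_surjOn_of_image_mem hσ (fun t ht => (hproj t ht).1) hs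
  exact (hproj t ht).2

theorem stmt12_general (hTV : ∀ t ∈ TV, #t = 3)
    (hPG : ∀ v : α, ∃ n ≥ 2, ∃ S : Finset α, v ∈ S ∧ IsPGSub n TV S) {φ : α → δ ⊕ α × A}
    (hφ : Function.Injective φ) (htriples : ∀ t ∈ TV, t.image φ ∈ MooreTriples TX TV TY j ℓ)
    (hMeet : ∀ v : α, #(univ.image φ ∩ MooreY (δ := δ) (A := A) v) ≤ 1) :
    ∃ f : α → A, (∀ v : α, f v ^ 6 = 1) ∧
      (∀ v₁ v₂ v₃ : α, {v₁, v₂, v₃} ∈ TV → f v₁ * f v₂ * f v₃ = 1) ∧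
      univ.image φ = univ.image fun v : α => (Sum.inr (v, f v) : δ ⊕ α × A) := by
  have hα (u : α) : ∃ u', u' ≠ u := by
    obtain ⟨n, hn, S, -, hS⟩ := hPG u
    have := hS.nontrivial (by omega)
    exact exists_ne u
  obtain ⟨f, σ, hσ⟩ := exists_transversal_of_mooreY_subsingleton hα fun v u hu u' hu' =>
    hφ (card_le_one.1 (hMeet v) _ (by simpa using hu) _ (by simpa using hu'))
  obtain rfl : φ = fun u => Sum.inr (σ u, f (σ u)) := funext hσ
  have hf : IsProdOne TV f := isProdOne_of_image_mem_mooreTriples hTV σ.injective htriples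
  refine ⟨f, fun v => ?_, fun v₁ v₂ v₃ hv => ?_, ?_⟩
  · obtain ⟨n, hn, S, hv, hS⟩ := hPG v
    exact hf.pow_six_eq_one_of_mem_isPGSub hn hS hv
  · exact (prod_triple_of_card_eq_three f (hTV _ hv)).symm.trans (hf _ hv)
  · conv_rhs => rw [← image_univ_equiv σ, image_image]
    rfl

end Moore

/-- **Proposition 3.5(ii).** In Moore's construction with `A` of even order and every
point of `V` in a `PG(3,2)` subsystem of `V`, every subsystem `W ≅ V` of `U` meeting
each `Y_v` in at most one point has the form `V_{V,f}` for some `f : V → A₆` with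
`f(v₁)f(v₂)f(v₃) = 1` on triples of `V`. -/
theorem stmt12 {δ α γ A : Type*} [Fintype δ] [Fintype α] [Fintype γ] [Fintype A]
    [Group A] (TX : Finset (Finset δ)) (TV : Finset (Finset α))
    (TY : Finset (Finset γ)) (j : δ → γ) (ℓ : A → γ)
    (hM : MooreSetup TX TV TY j ℓ)
    (hEven : Even (Fintype.card A))
    (hPG3 : ∀ v : α, ∃ S : Finset α, v ∈ S ∧ IsPGSub 3 TV S)
    (W : Finset (δ ⊕ α × A)) (φW : α → δ ⊕ α × A)
    (hφ : IsCopy TV (MooreTriples TX TV TY j ℓ) φW)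
    (hWφ : Finset.univ.image φW = W)
    (hMeet : ∀ v : α, (W ∩ MooreY (δ := δ) (A := A) v).card ≤ 1) :
    ∃ f : α → A, (∀ v : α, f v ^ 6 = 1) ∧
      (∀ v₁ v₂ v₃ : α, ({v₁, v₂, v₃} : Finset α) ∈ TV →
        f v₁ * f v₂ * f v₃ = 1) ∧
      W = Finset.univ.image fun v : α => (Sum.inr (v, f v) : δ ⊕ α × A) := by
  let _ : CommGroup A := hM.2.2.1.commGroup
  subst hWφ
  exact stmt12_general hM.2.1.1 (fun v => ⟨3, by norm_num, hPG3 v⟩) hφ.1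
    (fun t ht => by convert hφ.2.1 t ht) hMeet

end
end
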